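/- arXiv:2203.03663 — 7 statements merged into one kernel-verified Lean document; each statement's English description precedes it below -/
import Mathlib

section
/- Let V be a finite nonempty set of points in the plane and let G be the unit square graph on V. Then diam(G) ≤ 2 if and only if max( diam_G(BLF(V), TRF(V)), diam_G(TLF(V), BRF(V)) ) ≤ 2. -/
/-- The unit square graph on a finite set `V` of points in the plane: distinct points are
adjacent iff the closed axis-parallel unit squares centered at them intersect, i.e. iff
their Chebyshev distance is at most `1`. -/
def unitSquareGraph (V : Finset (ℝ × ℝ)) : SimpleGraph {p : ℝ × ℝ // p ∈ V} :=
  SimpleGraph.fromRel fun u v => max |u.1.1 - v.1.1| |u.1.2 - v.1.2| ≤ 1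

/-- Top-left front. -/
def TLF (V : Finset (ℝ × ℝ)) : Set (ℝ × ℝ) :=
  {p | p ∈ V ∧ ∀ q ∈ V, p.1 ≤ q.1 ∨ p.2 ≥ q.2}

/-- Bottom-right front. -/
def BRF (V : Finset (ℝ × ℝ)) : Set (ℝ × ℝ) :=
  {p | p ∈ V ∧ ∀ q ∈ V, p.1 ≥ q.1 ∨ p.2 ≤ q.2}

/-- Top-right front. -/
def TRF (V : Finset (ℝ × ℝ)) : Set (ℝ × ℝ) :=
  {p | p ∈ V ∧ ∀ q ∈ V, p.1 ≥ q.1 ∨ p.2 ≥ q.2}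

/-- Bottom-left front. -/
def BLF (V : Finset (ℝ × ℝ)) : Set (ℝ × ℝ) :=
  {p | p ∈ V ∧ ∀ q ∈ V, p.1 ≤ q.1 ∨ p.2 ≤ q.2}

/-!
A closed Chebyshev ball is an axis-parallel square, so a vertex `w` within distance `1` of two
points `a` and `b` is within distance `1` of every point of the box with opposite corners `a`
and `b`. Any two vertices `u` and `v` lie in such a box whose corners are taken from a pair of
opposite fronts: if `u` is to the lower left of `v`, some point of `BLF V` is weakly to the lower
left of `u` and some point of `TRF V` weakly to the upper right of `v`; the other diagonal is
symmetric. A vertex witnessing distance at most `2` between the corners therefore does so for `u`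
and `v`.
-/

open Set Metric

theorem mem_uIcc_prod_iff {α β : Type*} [Lattice α] [Lattice β] {a b x : α × β} :
    x ∈ uIcc a b ↔ x.1 ∈ uIcc a.1 b.1 ∧ x.2 ∈ uIcc a.2 b.2 :=
  and_and_and_comm

theorem closedBall_real_prod_eq_Icc (w : ℝ × ℝ) (r : ℝ) :
    closedBall w r = Icc (w.1 - r, w.2 - r) (w.1 + r, w.2 + r) := by
  rw [← closedBall_prod_same, Real.closedBall_eq_Icc, Real.closedBall_eq_Icc, Icc_prod_Icc]

theorem uIcc_subset_closedBall_real_prod {a b w : ℝ × ℝ} {r : ℝ}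
    (ha : a ∈ closedBall w r) (hb : b ∈ closedBall w r) : uIcc a b ⊆ closedBall w r := by
  rw [closedBall_real_prod_eq_Icc] at ha hb ⊢
  exact uIcc_subset_Icc ha hb

section Distance

theorem edist_le_natCast_add_iff {α : Type*} {G : SimpleGraph α} {u v : α} {m n : ℕ} :
    G.edist u v ≤ m + n ↔ ∃ w, G.edist u w ≤ m ∧ G.edist w v ≤ n := by
  constructor
  · intro h
    obtain ⟨p, hp⟩ := G.exists_walk_of_edist_ne_top
      (ne_top_of_le_ne_top (ENat.natCast_ne_top (m + n)) (mod_cast h))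
    have hlen : p.length ≤ m + n := mod_cast hp.trans_le h
    refine ⟨p.getVert m, (p.take m).edist_le.trans ?_, (p.drop m).edist_le.trans ?_⟩
    · rw [p.take_length]
      exact mod_cast min_le_left _ _
    · rw [p.drop_length]
      exact mod_cast Nat.sub_le_iff_le_add'.2 hlen
  · rintro ⟨w, huw, hwv⟩
    exact G.edist_triangle.trans (add_le_add huw hwv)

variable {V : Finset (ℝ × ℝ)} {u v : {p : ℝ × ℝ // p ∈ V}}

theorem unitSquareGraph_adj_iff : (unitSquareGraph V).Adj u v ↔ u ≠ v ∧ dist u v ≤ 1 := by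
  -- `dist` on `ℝ × ℝ` unfolds to the Chebyshev distance in `unitSquareGraph`.
  change u ≠ v ∧ (dist u v ≤ 1 ∨ dist v u ≤ 1) ↔ _
  rw [dist_comm v u, or_self]

theorem unitSquareGraph_edist_le_one_iff :
    (unitSquareGraph V).edist u v ≤ 1 ↔ dist u v ≤ 1 := by
  rw [SimpleGraph.edist_le_one_iff_adj_or_eq, unitSquareGraph_adj_iff]
  rcases eq_or_ne u v with rfl | huv <;> simp [*]

theorem unitSquareGraph_edist_le_two_iff :
    (unitSquareGraph V).edist u v ≤ 2 ↔ ∃ w ∈ V, u.1 ∈ closedBall w 1 ∧ v.1 ∈ closedBall w 1 := by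
  rw [← one_add_one_eq_two, ← Nat.cast_one, edist_le_natCast_add_iff]
  simp only [Nat.cast_one, unitSquareGraph_edist_le_one_iff, dist_comm _ v, Subtype.exists,
    exists_prop, Subtype.dist_eq, mem_closedBall]

end Distance

section Fronts

theorem exists_le_and_forall_le_or_le {ι α β : Type*} [LinearOrder α] [LinearOrder β]
    {s : Finset ι} (f : ι → α) (g : ι → β) {i : ι} (hi : i ∈ s) :
    ∃ j ∈ s, (f j ≤ f i ∧ g j ≤ g i) ∧ ∀ k ∈ s, f j ≤ f k ∨ g j ≤ g k := by
  obtain ⟨j, hj, hmin⟩ := Finset.exists_minimalFor (fun k => (f k, g k))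
    {k ∈ s | f k ≤ f i ∧ g k ≤ g i} ⟨i, by simp [hi]⟩
  obtain ⟨hjs, hfj, hgj⟩ := Finset.mem_filter.1 hj
  refine ⟨j, hjs, ⟨hfj, hgj⟩, fun k hk => ?_⟩
  by_contra! ⟨hf, hg⟩
  have hjk := hmin (Finset.mem_filter.2 ⟨hk, hf.le.trans hfj, hg.le.trans hgj⟩) ⟨hf.le, hg.le⟩
  exact hf.not_ge hjk.1

variable {V : Finset (ℝ × ℝ)} {u v : ℝ × ℝ}

open OrderDual

theorem exists_mem_BLF_le (hu : u ∈ V) : ∃ a ∈ BLF V, a.1 ≤ u.1 ∧ a.2 ≤ u.2 :=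
  have ⟨a, ha, hau, hfront⟩ := exists_le_and_forall_le_or_le Prod.fst Prod.snd hu
  ⟨a, ⟨ha, hfront⟩, hau⟩

theorem exists_mem_TRF_ge (hu : u ∈ V) : ∃ a ∈ TRF V, u.1 ≤ a.1 ∧ u.2 ≤ a.2 :=
  have ⟨a, ha, hau, hfront⟩ :=
    exists_le_and_forall_le_or_le (toDual ∘ Prod.fst) (toDual ∘ Prod.snd) hu
  ⟨a, ⟨ha, hfront⟩, hau⟩

theorem exists_mem_TLF_le_ge (hu : u ∈ V) : ∃ a ∈ TLF V, a.1 ≤ u.1 ∧ u.2 ≤ a.2 :=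
  have ⟨a, ha, hau, hfront⟩ := exists_le_and_forall_le_or_le Prod.fst (toDual ∘ Prod.snd) hu
  ⟨a, ⟨ha, hfront⟩, hau⟩

theorem exists_mem_BRF_ge_le (hu : u ∈ V) : ∃ a ∈ BRF V, u.1 ≤ a.1 ∧ a.2 ≤ u.2 :=
  have ⟨a, ha, hau, hfront⟩ := exists_le_and_forall_le_or_le (toDual ∘ Prod.fst) Prod.snd hu
  ⟨a, ⟨ha, hfront⟩, hau⟩

theorem exists_opposite_fronts_mem_uIcc (hu : u ∈ V) (hv : v ∈ V) :
    ∃ a b, (a ∈ BLF V ∧ b ∈ TRF V ∨ a ∈ TLF V ∧ b ∈ BRF V) ∧ u ∈ uIcc a b ∧ v ∈ uIcc a b := by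
  wlog hx : u.1 ≤ v.1 generalizing u v
  · obtain ⟨a, b, hab, hva, hua⟩ := this hv hu (le_of_not_ge hx)
    exact ⟨a, b, hab, hua, hva⟩
  simp only [mem_uIcc_prod_iff]
  rcases le_total u.2 v.2 with hy | hy
  · obtain ⟨a, ha, hax, hay⟩ := exists_mem_BLF_le hu
    obtain ⟨b, hb, hbx, hby⟩ := exists_mem_TRF_ge hv
    exact ⟨a, b, .inl ⟨ha, hb⟩,
      ⟨mem_uIcc_of_le hax (hx.trans hbx), mem_uIcc_of_le hay (hy.trans hby)⟩,
      ⟨mem_uIcc_of_le (hax.trans hx) hbx, mem_uIcc_of_le (hay.trans hy) hby⟩⟩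
  · obtain ⟨a, ha, hax, hay⟩ := exists_mem_TLF_le_ge hu
    obtain ⟨b, hb, hbx, hby⟩ := exists_mem_BRF_ge_le hv
    exact ⟨a, b, .inr ⟨ha, hb⟩,
      ⟨mem_uIcc_of_le hax (hx.trans hbx), mem_uIcc_of_ge (hby.trans hy) hay⟩,
      ⟨mem_uIcc_of_le (hax.trans hx) hbx, mem_uIcc_of_ge hby (hy.trans hay)⟩⟩

end Fronts

/-- For a finite nonempty set `V` of points in the plane and the unit square
graph `G` on `V`, we have `diam G ≤ 2` iff
`max (diam_G (BLF V, TRF V), diam_G (TLF V, BRF V)) ≤ 2`. -/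
theorem unitSquareGraph_diam_le_two_iff_fronts (V : Finset (ℝ × ℝ)) (hV : V.Nonempty) :
    (unitSquareGraph V).ediam ≤ 2 ↔
      ((∀ a b : {p : ℝ × ℝ // p ∈ V}, a.1 ∈ BLF V → b.1 ∈ TRF V →
          (unitSquareGraph V).edist a b ≤ 2) ∧
       (∀ a b : {p : ℝ × ℝ // p ∈ V}, a.1 ∈ TLF V → b.1 ∈ BRF V →
          (unitSquareGraph V).edist a b ≤ 2)) := by
  refine ⟨fun h => ⟨fun a b _ _ => SimpleGraph.edist_le_ediam.trans h,
    fun a b _ _ => SimpleGraph.edist_le_ediam.trans h⟩, fun ⟨hBLTR, hTLBR⟩ => ?_⟩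
  refine SimpleGraph.ediam_le_of_edist_le fun u v => ?_
  obtain ⟨a, b, hfronts, hu, hv⟩ := exists_opposite_fronts_mem_uIcc u.2 v.2
  obtain ⟨w, hw, haw, hbw⟩ : ∃ w ∈ V, a ∈ closedBall w 1 ∧ b ∈ closedBall w 1 := by
    rcases hfronts with ⟨ha, hb⟩ | ⟨ha, hb⟩
    · exact unitSquareGraph_edist_le_two_iff.1 (hBLTR ⟨a, ha.1⟩ ⟨b, hb.1⟩ ha hb)
    · exact unitSquareGraph_edist_le_two_iff.1 (hTLBR ⟨a, ha.1⟩ ⟨b, hb.1⟩ ha hb)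
  have hbox : uIcc a b ⊆ closedBall w 1 := uIcc_subset_closedBall_real_prod haw hbw
  exact unitSquareGraph_edist_le_two_iff.2 ⟨w, hw, hbox hu, hbox hv⟩
end

section
/- In the segment construction's intersection graph G, every pair of distinct vertices (u,v) such that neither (u ∈ {ā_1,…,ā_n} and v ∈ {b̄_1,…,b̄_n}) nor (u ∈ {b̄_1,…,b̄_n} and v ∈ {ā_1,…,ā_n}) satisfies dist_G(u,v) ≤ 3. -/
/-- Vertices of the segment construction for vectors `a₁,…,aₙ, b₁,…,bₙ ∈ {0,1}^d`
(coordinates are indexed by `k ∈ [d] = {1,…,d}`):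
the points `ā i = (i,1)` and `b̄ j = (j,−1)`, the segment `ℓ`, the segments `e i k`
(present iff `(a i) k = 1`) and the segments `e' j k` (present iff `(b j) k = 1`). -/
inductive SegVert (n d : ℕ) (a b : Fin n → ℕ → Bool) : Type where
  | A (i : Fin n)
  | B (j : Fin n)
  | L
  | E (i : Fin n) (k : ℕ) (hk : k ∈ Finset.Icc 1 d) (h : a i k = true)
  | E' (j : Fin n) (k : ℕ) (hk : k ∈ Finset.Icc 1 d) (h : b j k = true)

/-- The closed segment in `ℝ²` corresponding to each vertex of the construction:
`ā i` is the single point `(i, 1)` (for `i ∈ [n]`), `b̄ j` is the single point `(j, −1)`,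
`ℓ` goes from `(1,0)` to `(d,0)`, `e i k` goes from `(i,1)` to `(k,0)`, and
`e' j k` goes from `(j,−1)` to `(k,0)`. -/
noncomputable def segOf {n d : ℕ} {a b : Fin n → ℕ → Bool} :
    SegVert n d a b → Set (ℝ × ℝ)
  | .A i => {(((i : ℕ) : ℝ) + 1, 1)}
  | .B j => {(((j : ℕ) : ℝ) + 1, -1)}
  | .L => segment ℝ ((1 : ℝ), (0 : ℝ)) ((d : ℝ), (0 : ℝ))
  | .E i k _ _ => segment ℝ (((i : ℕ) : ℝ) + 1, (1 : ℝ)) ((k : ℝ), (0 : ℝ))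
  | .E' j k _ _ => segment ℝ (((j : ℕ) : ℝ) + 1, (-1 : ℝ)) ((k : ℝ), (0 : ℝ))

/-- The intersection graph of the segment construction: two distinct segments are adjacent
iff they have a common point. -/
noncomputable def segGraph (n d : ℕ) (a b : Fin n → ℕ → Bool) :
    SimpleGraph (SegVert n d a b) :=
  SimpleGraph.fromRel fun u v => (segOf u ∩ segOf v).Nonempty

/-!
Every segment other than the points `ā i`, `b̄ j` meets `ℓ`, and every point lies on a segment that
meets `ℓ`. So all vertices are within distance `2` of `ℓ`, and a pair containing a vertex that is
not a point is within distance `2 + 1`. Two points on the same side, with vectors sharing a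
coordinate `k`, are joined through their segments to `(k, 0)`; the coordinates `d - 1` and `d` are
shared by all `a i` and all `b j` respectively.
-/

section IntersectionGraph

variable {V α : Type*}

/-- The intersection graph of a family of sets indexed by `V`. Distinct indices are distinct
vertices even if the sets they carry coincide. By definition, `segGraph n d a b` is
`intersectionGraph segOf`. -/
def intersectionGraph (s : V → Set α) : SimpleGraph V :=
  SimpleGraph.fromRel fun u v => (s u ∩ s v).Nonempty

variable {s : V → Set α} {u v x y : V}

theorem intersectionGraph_edist_le_one (huv : (s u ∩ s v).Nonempty) :
    (intersectionGraph s).edist u v ≤ 1 :=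
  SimpleGraph.edist_le_one_iff_adj_or_eq.2 <|
    (eq_or_ne u v).symm.imp_left fun hne => ⟨hne, .inl huv⟩

theorem intersectionGraph_edist_le_two (hux : (s u ∩ s x).Nonempty)
    (hxv : (s x ∩ s v).Nonempty) : (intersectionGraph s).edist u v ≤ 2 :=
  calc (intersectionGraph s).edist u v
    _ ≤ (intersectionGraph s).edist u x + (intersectionGraph s).edist x v :=
      SimpleGraph.edist_triangle
    _ ≤ 1 + 1 :=
      add_le_add (intersectionGraph_edist_le_one hux) (intersectionGraph_edist_le_one hxv)
    _ = 2 := one_add_one_eq_two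

theorem intersectionGraph_edist_le_three (hux : (s u ∩ s x).Nonempty)
    (hxy : (s x ∩ s y).Nonempty) (hyv : (s y ∩ s v).Nonempty) :
    (intersectionGraph s).edist u v ≤ 3 :=
  calc (intersectionGraph s).edist u v
    _ ≤ (intersectionGraph s).edist u y + (intersectionGraph s).edist y v :=
      SimpleGraph.edist_triangle
    _ ≤ 2 + 1 :=
      add_le_add (intersectionGraph_edist_le_two hux hxy) (intersectionGraph_edist_le_one hyv)
    _ = 3 := two_add_one_eq_three

end IntersectionGraph

section SegmentConstruction

variable {n d : ℕ} {a b : Fin n → ℕ → Bool} {i j : Fin n} {k : ℕ}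

theorem mem_segOf_L (hk : k ∈ Finset.Icc 1 d) :
    ((k : ℝ), (0 : ℝ)) ∈ segOf (.L : SegVert n d a b) := by
  obtain ⟨h1k, hkd⟩ := Finset.mem_Icc.1 hk
  rw [segOf, ← Prod.image_mk_segment_left, segment_eq_Icc (mod_cast h1k.trans hkd)]
  exact Set.mem_image_of_mem _ ⟨mod_cast h1k, mod_cast hkd⟩

theorem segOf_A_inter_E_nonempty (hk : k ∈ Finset.Icc 1 d) (hi : a i k = true) :
    (segOf (.A i : SegVert n d a b) ∩
      segOf (.E i k hk hi : SegVert n d a b)).Nonempty :=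
  ⟨((i : ℕ) + 1, 1), Set.mem_singleton _, left_mem_segment ℝ _ _⟩

theorem segOf_B_inter_E'_nonempty (hk : k ∈ Finset.Icc 1 d) (hj : b j k = true) :
    (segOf (.B j : SegVert n d a b) ∩
      segOf (.E' j k hk hj : SegVert n d a b)).Nonempty :=
  ⟨((j : ℕ) + 1, -1), Set.mem_singleton _, left_mem_segment ℝ _ _⟩

theorem segOf_E_inter_E_nonempty (hk : k ∈ Finset.Icc 1 d) (hi : a i k = true)
    (hj : a j k = true) :
    (segOf (.E i k hk hi : SegVert n d a b) ∩
      segOf (.E j k hk hj : SegVert n d a b)).Nonempty :=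
  ⟨(k, 0), right_mem_segment ℝ _ _, right_mem_segment ℝ _ _⟩

theorem segOf_E'_inter_E'_nonempty (hk : k ∈ Finset.Icc 1 d) (hi : b i k = true)
    (hj : b j k = true) :
    (segOf (.E' i k hk hi : SegVert n d a b) ∩
      segOf (.E' j k hk hj : SegVert n d a b)).Nonempty :=
  ⟨(k, 0), right_mem_segment ℝ _ _, right_mem_segment ℝ _ _⟩

theorem segOf_E_inter_L_nonempty (hk : k ∈ Finset.Icc 1 d) (hi : a i k = true) :
    (segOf (.E i k hk hi : SegVert n d a b) ∩
      segOf (.L : SegVert n d a b)).Nonempty :=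
  ⟨(k, 0), right_mem_segment ℝ _ _, mem_segOf_L hk⟩

theorem segOf_E'_inter_L_nonempty (hk : k ∈ Finset.Icc 1 d) (hj : b j k = true) :
    (segOf (.E' j k hk hj : SegVert n d a b) ∩
      segOf (.L : SegVert n d a b)).Nonempty :=
  ⟨(k, 0), right_mem_segment ℝ _ _, mem_segOf_L hk⟩

theorem segGraph_edist_A_A_le_three (hk : k ∈ Finset.Icc 1 d) (hi : a i k = true)
    (hj : a j k = true) : (segGraph n d a b).edist (.A i) (.A j) ≤ 3 :=
  intersectionGraph_edist_le_three (segOf_A_inter_E_nonempty hk hi)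
    (segOf_E_inter_E_nonempty hk hi hj) (Set.inter_comm _ _ ▸ segOf_A_inter_E_nonempty hk hj)

theorem segGraph_edist_B_B_le_three (hk : k ∈ Finset.Icc 1 d) (hi : b i k = true)
    (hj : b j k = true) : (segGraph n d a b).edist (.B i) (.B j) ≤ 3 :=
  intersectionGraph_edist_le_three (segOf_B_inter_E'_nonempty hk hi)
    (segOf_E'_inter_E'_nonempty hk hi hj) (Set.inter_comm _ _ ▸ segOf_B_inter_E'_nonempty hk hj)

theorem segGraph_edist_E_L_le_one (hk : k ∈ Finset.Icc 1 d) (hi : a i k = true) :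
    (segGraph n d a b).edist (.E i k hk hi) .L ≤ 1 :=
  intersectionGraph_edist_le_one (segOf_E_inter_L_nonempty hk hi)

theorem segGraph_edist_E'_L_le_one (hk : k ∈ Finset.Icc 1 d) (hj : b j k = true) :
    (segGraph n d a b).edist (.E' j k hk hj) .L ≤ 1 :=
  intersectionGraph_edist_le_one (segOf_E'_inter_L_nonempty hk hj)

theorem segGraph_edist_L_le_two (ha : ∀ i, ∃ k ∈ Finset.Icc 1 d, a i k = true)
    (hb : ∀ j, ∃ k ∈ Finset.Icc 1 d, b j k = true) (u : SegVert n d a b) :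
    (segGraph n d a b).edist u .L ≤ 2 := by
  cases u with
  | A i =>
    obtain ⟨k, hk, hi⟩ := ha i
    exact intersectionGraph_edist_le_two (segOf_A_inter_E_nonempty hk hi)
      (segOf_E_inter_L_nonempty hk hi)
  | B j =>
    obtain ⟨k, hk, hj⟩ := hb j
    exact intersectionGraph_edist_le_two (segOf_B_inter_E'_nonempty hk hj)
      (segOf_E'_inter_L_nonempty hk hj)
  | L => exact SimpleGraph.edist_self.trans_le zero_le_two
  | E i k hk hi => exact (segGraph_edist_E_L_le_one hk hi).trans one_le_two
  | E' j k hk hj => exact (segGraph_edist_E'_L_le_one hk hj).trans one_le_two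

theorem segGraph_edist_le_three_of_edist_L_le_one
    (ha : ∀ i, ∃ k ∈ Finset.Icc 1 d, a i k = true)
    (hb : ∀ j, ∃ k ∈ Finset.Icc 1 d, b j k = true) (u : SegVert n d a b) {v : SegVert n d a b}
    (hv : (segGraph n d a b).edist v .L ≤ 1) : (segGraph n d a b).edist u v ≤ 3 :=
  calc (segGraph n d a b).edist u v
    _ ≤ (segGraph n d a b).edist u .L + (segGraph n d a b).edist .L v :=
      SimpleGraph.edist_triangle
    _ ≤ 2 + 1 :=
      add_le_add (segGraph_edist_L_le_two ha hb u) (SimpleGraph.edist_comm.trans_le hv)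
    _ = 3 := two_add_one_eq_three

theorem segGraph_dist_le_three_general
    (ha : ∀ i j, ∃ k ∈ Finset.Icc 1 d, a i k = true ∧ a j k = true)
    (hb : ∀ i j, ∃ k ∈ Finset.Icc 1 d, b i k = true ∧ b j k = true)
    (u v : SegVert n d a b)
    (hAB : ¬ ((∃ i, u = .A i) ∧ (∃ j, v = .B j)))
    (hBA : ¬ ((∃ j, u = .B j) ∧ (∃ i, v = .A i))) :
    (segGraph n d a b).edist u v ≤ 3 := by
  have near_right (x) {y : SegVert n d a b} :
      (segGraph n d a b).edist y .L ≤ 1 → (segGraph n d a b).edist x y ≤ 3 :=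
    segGraph_edist_le_three_of_edist_L_le_one
      (fun i => (ha i i).imp fun _ hk => ⟨hk.1, hk.2.1⟩)
      (fun j => (hb j j).imp fun _ hk => ⟨hk.1, hk.2.1⟩) x
  have near_left {x : SegVert n d a b} (y) (hx : (segGraph n d a b).edist x .L ≤ 1) :
      (segGraph n d a b).edist x y ≤ 3 :=
    SimpleGraph.edist_comm.trans_le (near_right y hx)
  have hLL : (segGraph n d a b).edist .L .L ≤ 1 := SimpleGraph.edist_self.trans_le zero_le_one
  match u, v with
  | .L, v => exact near_left v hLL
  | .E _ _ hk hi, v => exact near_left v (segGraph_edist_E_L_le_one hk hi)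
  | .E' _ _ hk hj, v => exact near_left v (segGraph_edist_E'_L_le_one hk hj)
  | u, .L => exact near_right u hLL
  | u, .E _ _ hk hi => exact near_right u (segGraph_edist_E_L_le_one hk hi)
  | u, .E' _ _ hk hj => exact near_right u (segGraph_edist_E'_L_le_one hk hj)
  | .A i, .A j =>
    obtain ⟨k, hk, hi, hj⟩ := ha i j
    exact segGraph_edist_A_A_le_three hk hi hj
  | .B i, .B j =>
    obtain ⟨k, hk, hi, hj⟩ := hb i j
    exact segGraph_edist_B_B_le_three hk hi hj
  | .A i, .B j => exact absurd ⟨⟨i, rfl⟩, ⟨j, rfl⟩⟩ hAB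
  | .B j, .A i => exact absurd ⟨⟨j, rfl⟩, ⟨i, rfl⟩⟩ hBA

end SegmentConstruction

/-- In the segment construction's intersection graph, every pair of distinct
vertices not consisting of an `ā`-vertex together with a `b̄`-vertex is within distance `3`. -/
theorem segGraph_dist_le_three (n d : ℕ) (hn : 1 ≤ n) (hd : 2 ≤ d)
    (a b : Fin n → ℕ → Bool)
    (ha1 : ∀ i, a i (d - 1) = true) (ha2 : ∀ i, a i d = false)
    (hb1 : ∀ j, b j (d - 1) = false) (hb2 : ∀ j, b j d = true)
    (u v : SegVert n d a b) (huv : u ≠ v)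
    (hAB : ¬ ((∃ i, u = SegVert.A i) ∧ (∃ j, v = SegVert.B j)))
    (hBA : ¬ ((∃ j, u = SegVert.B j) ∧ (∃ i, v = SegVert.A i))) :
    (segGraph n d a b).edist u v ≤ 3 :=
  segGraph_dist_le_three_general
    (fun i j => ⟨d - 1, Finset.mem_Icc.2 (by omega), ha1 i, ha1 j⟩)
    (fun i j => ⟨d, Finset.mem_Icc.2 (by omega), hb2 i, hb2 j⟩) u v hAB hBA
end

section
/- Let n ≥ 1, d ≥ 2, and let a_1,…,a_n, b_1,…,b_n ∈ {0,1}^d satisfy (a_i)_{d−1} = 1 for all i and (b_j)_d = 1 for all j. Let H be the graph whose vertices are the vector nodes a_1,…,a_n and b_1,…,b_n together with coordinate nodes 1,…,d, with edges: a vector node v is adjacent to coordinate node k iff v_k = 1, and every two distinct coordinate nodes are adjacent. Then there exist i, j with a_i and b_j orthogonal if and only if diam(H) ≥ 3. In particular, for every i, j: dist_H(a_i, b_j) ≤ 2 iff a_i and b_j are not orthogonal, and all pairs of vertices not of the form (a_i, b_j) have distance at most 2. -/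
/-- Vertices of the Roditty–Vassilevska-Williams reduction graph: vector nodes `va i`
(for `a i`), vector nodes `vb j` (for `b j`), and coordinate nodes `coord k` for
`k ∈ [d] = {1,…,d}`. -/
inductive RVVert (n d : ℕ) : Type where
  | va (i : Fin n)
  | vb (j : Fin n)
  | coord (k : ℕ) (hk : k ∈ Finset.Icc 1 d)

/-- Base relation generating the edges: a vector node is connected to coordinate node `k`
iff its `k`-th coordinate equals `1`, and any two distinct coordinate nodes are connected. -/
def rvRel (n d : ℕ) (a b : Fin n → ℕ → Bool) : RVVert n d → RVVert n d → Prop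
  | .va i, .coord k _ => a i k = true
  | .vb j, .coord k _ => b j k = true
  | .coord _ _, .coord _ _ => True
  | _, _ => False

/-- The reduction graph `H`. -/
def rvGraph (n d : ℕ) (a b : Fin n → ℕ → Bool) : SimpleGraph (RVVert n d) :=
  SimpleGraph.fromRel (rvRel n d a b)

/-- Two `{0,1}`-vectors with coordinates indexed by `[d] = {1,…,d}` are orthogonal iff there
is no coordinate `k ∈ [d]` where both equal `1`. -/
def Orth (d : ℕ) (u v : ℕ → Bool) : Prop :=
  ¬ ∃ k ∈ Finset.Icc 1 d, u k = true ∧ v k = true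

/-!
A path of length two between two vector nodes must pass through a coordinate at which both vectors
equal `1`, so such nodes are at distance at most two exactly when they coincide or their vectors are
not orthogonal. The coordinate nodes form a clique, hence every nonzero vector node is within
distance two of all of them. As all `a i` share the coordinate `d - 1` and all `b j` share `d`, each
family is pairwise non-orthogonal with nonzero members, and only a pair `a i`, `b j` can be further
apart than two.
-/

section SimpleGraph

variable {V : Type*} {G : SimpleGraph V} {u v : V}

theorem edist_le_two_iff :
    G.edist u v ≤ 2 ↔ u = v ∨ G.Adj u v ∨ (G.commonNeighbors u v).Nonempty := by
  rw [← not_lt, SimpleGraph.two_lt_edist_iff, Set.nonempty_iff_ne_empty]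
  tauto

theorem edist_le_one_of_isClique {K : Set V} (hK : G.IsClique K) (hu : u ∈ K) (hv : v ∈ K) :
    G.edist u v ≤ 1 :=
  SimpleGraph.edist_le_one_iff_adj_or_eq.2 (or_iff_not_imp_right.2 (hK hu hv))

theorem edist_le_two_of_adj_of_isClique {K : Set V} (hK : G.IsClique K) {w : V} (huw : G.Adj u w)
    (hw : w ∈ K) (hv : v ∈ K) : G.edist u v ≤ 2 :=
  calc
    G.edist u v ≤ G.edist u w + G.edist w v := SimpleGraph.edist_triangle
    _ ≤ 1 + 1 := add_le_add (SimpleGraph.edist_eq_one_iff_adj.2 huw).le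
      (edist_le_one_of_isClique hK hw hv)
    _ = 2 := one_add_one_eq_two

theorem lt_ediam_iff {k : ℕ∞} : k < G.ediam ↔ ∃ u v, k < G.edist u v := by
  simp only [SimpleGraph.ediam, SimpleGraph.eccent, lt_iSup_iff]

end SimpleGraph

theorem not_orth_iff {d : ℕ} {u v : ℕ → Bool} :
    ¬ Orth d u v ↔ ∃ k ∈ Finset.Icc 1 d, u k = true ∧ v k = true :=
  not_not

/-- The vector nodes of the reduction graph, with both families indexed by one sum type: the node
`vec x` carries the vector `Sum.elim a b x`, so that `a` and `b` need not be treated separately. -/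
def RVVert.vec {n d : ℕ} : Fin n ⊕ Fin n → RVVert n d :=
  Sum.elim .va .vb

section RVGraph

variable {n d : ℕ} {a b : Fin n → ℕ → Bool}

theorem RVVert.vec_injective : Function.Injective (RVVert.vec (n := n) (d := d)) := by
  rintro (i | j) (i' | j') h <;> simp_all [RVVert.vec]

theorem rvGraph_adj_vec_iff {x : Fin n ⊕ Fin n} {w : RVVert n d} :
    (rvGraph n d a b).Adj (.vec x) w ↔
      ∃ k, ∃ hk : k ∈ Finset.Icc 1 d, w = .coord k hk ∧ Sum.elim a b x k = true := by
  cases w with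
  | coord k hk =>
    rcases x with i | j <;>
      simpa [rvGraph, rvRel, RVVert.vec] using fun _ ↦ Finset.mem_Icc.1 hk
  | _ => rcases x with i | j <;> simp [rvGraph, rvRel, RVVert.vec]

theorem not_rvGraph_adj_vec_vec {x y : Fin n ⊕ Fin n} :
    ¬ (rvGraph n d a b).Adj (.vec x) (.vec y) := by
  rw [rvGraph_adj_vec_iff]
  rcases y with i | j <;> simp [RVVert.vec]

theorem isClique_rvGraph_coord :
    (rvGraph n d a b).IsClique {u | ∃ k hk, u = .coord k hk} := by
  rintro _ ⟨k, hk, rfl⟩ _ ⟨l, hl, rfl⟩ hkl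
  exact ⟨hkl, .inl trivial⟩

theorem rvGraph_commonNeighbors_vec_nonempty_iff {x y : Fin n ⊕ Fin n} :
    ((rvGraph n d a b).commonNeighbors (.vec x) (.vec y)).Nonempty ↔
      ¬ Orth d (Sum.elim a b x) (Sum.elim a b y) := by
  simp only [Set.Nonempty, SimpleGraph.mem_commonNeighbors, not_orth_iff]
  constructor
  · rintro ⟨w, hx, hy⟩
    obtain ⟨k, hk, rfl, hxk⟩ := rvGraph_adj_vec_iff.1 hx
    obtain ⟨_, _, ⟨⟩, hyk⟩ := rvGraph_adj_vec_iff.1 hy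
    exact ⟨k, hk, hxk, hyk⟩
  · rintro ⟨k, hk, hxk, hyk⟩
    exact ⟨.coord k hk, rvGraph_adj_vec_iff.2 ⟨k, hk, rfl, hxk⟩,
      rvGraph_adj_vec_iff.2 ⟨k, hk, rfl, hyk⟩⟩

theorem rvGraph_edist_vec_vec_le_two_iff {x y : Fin n ⊕ Fin n} :
    (rvGraph n d a b).edist (.vec x) (.vec y) ≤ 2 ↔
      x = y ∨ ¬ Orth d (Sum.elim a b x) (Sum.elim a b y) := by
  rw [edist_le_two_iff, RVVert.vec_injective.eq_iff, or_iff_right not_rvGraph_adj_vec_vec,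
    rvGraph_commonNeighbors_vec_nonempty_iff]

theorem rvGraph_edist_va_vb_le_two_iff {i j : Fin n} :
    (rvGraph n d a b).edist (.va i) (.vb j) ≤ 2 ↔ ¬ Orth d (a i) (b j) :=
  rvGraph_edist_vec_vec_le_two_iff (x := .inl i) (y := .inr j).trans
    (or_iff_right Sum.inl_ne_inr)

theorem rvGraph_edist_vec_coord_le_two {x : Fin n ⊕ Fin n}
    (hx : ¬ Orth d (Sum.elim a b x) (Sum.elim a b x)) {k : ℕ} (hk : k ∈ Finset.Icc 1 d) :
    (rvGraph n d a b).edist (.vec x) (.coord k hk) ≤ 2 := by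
  obtain ⟨l, hl, hxl, -⟩ := not_orth_iff.1 hx
  exact edist_le_two_of_adj_of_isClique isClique_rvGraph_coord
    (rvGraph_adj_vec_iff.2 ⟨l, hl, rfl, hxl⟩) ⟨l, hl, rfl⟩ ⟨k, hk, rfl⟩

theorem rvGraph_edist_coord_coord_le_one {k l : ℕ} (hk : k ∈ Finset.Icc 1 d)
    (hl : l ∈ Finset.Icc 1 d) :
    (rvGraph n d a b).edist (.coord k hk) (.coord l hl) ≤ 1 :=
  edist_le_one_of_isClique isClique_rvGraph_coord ⟨k, hk, rfl⟩ ⟨l, hl, rfl⟩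

theorem rvGraph_edist_le_two (ha : ∀ i i', ¬ Orth d (a i) (a i'))
    (hb : ∀ j j', ¬ Orth d (b j) (b j')) {u v : RVVert n d}
    (hab : ¬ ((∃ i, u = .va i) ∧ ∃ j, v = .vb j))
    (hba : ¬ ((∃ j, u = .vb j) ∧ ∃ i, v = .va i)) :
    (rvGraph n d a b).edist u v ≤ 2 := by
  have edist_va_coord (i k) (hk : k ∈ Finset.Icc 1 d) :
      (rvGraph n d a b).edist (.va i) (.coord k hk) ≤ 2 :=
    rvGraph_edist_vec_coord_le_two (x := .inl i) (ha i i) hk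
  have edist_vb_coord (j k) (hk : k ∈ Finset.Icc 1 d) :
      (rvGraph n d a b).edist (.vb j) (.coord k hk) ≤ 2 :=
    rvGraph_edist_vec_coord_le_two (x := .inr j) (hb j j) hk
  match u, v with
  | .va i, .va i' =>
    exact rvGraph_edist_vec_vec_le_two_iff (x := .inl i) (y := .inl i').2 (.inr (ha i i'))
  | .vb j, .vb j' =>
    exact rvGraph_edist_vec_vec_le_two_iff (x := .inr j) (y := .inr j').2 (.inr (hb j j'))
  | .va i, .vb j => exact absurd ⟨⟨i, rfl⟩, j, rfl⟩ hab
  | .vb j, .va i => exact absurd ⟨⟨j, rfl⟩, i, rfl⟩ hba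
  | .va i, .coord k hk => exact edist_va_coord i k hk
  | .vb j, .coord k hk => exact edist_vb_coord j k hk
  | .coord k hk, .va i => exact SimpleGraph.edist_comm.trans_le (edist_va_coord i k hk)
  | .coord k hk, .vb j => exact SimpleGraph.edist_comm.trans_le (edist_vb_coord j k hk)
  | .coord k hk, .coord l hl => exact (rvGraph_edist_coord_coord_le_one hk hl).trans one_le_two

theorem exists_orth_iff_three_le_ediam_rvGraph (ha : ∀ i i', ¬ Orth d (a i) (a i'))
    (hb : ∀ j j', ¬ Orth d (b j) (b j')) :
    (∃ i j, Orth d (a i) (b j)) ↔ 3 ≤ (rvGraph n d a b).ediam := by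
  have orth_iff {i j} : Orth d (a i) (b j) ↔ 2 < (rvGraph n d a b).edist (.va i) (.vb j) := by
    rw [← not_le, rvGraph_edist_va_vb_le_two_iff, not_not]
  have three_le_ediam_iff :
      3 ≤ (rvGraph n d a b).ediam ↔ ∃ u v, 2 < (rvGraph n d a b).edist u v := by
    rw [← two_add_one_eq_three, ENat.add_one_le_iff (by simp), lt_ediam_iff]
  simp only [three_le_ediam_iff, orth_iff]
  constructor
  · rintro ⟨i, j, hij⟩
    exact ⟨.va i, .vb j, hij⟩
  · rintro ⟨u, v, huv⟩
    by_contra! hle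
    refine huv.not_ge (rvGraph_edist_le_two ha hb ?_ ?_)
    · rintro ⟨⟨i, rfl⟩, j, rfl⟩
      exact huv.not_ge (hle i j)
    · rintro ⟨⟨j, rfl⟩, i, rfl⟩
      exact huv.not_ge (SimpleGraph.edist_comm.trans_le (hle i j))

theorem rvGraph_diameter_general (ha : ∀ i i', ¬ Orth d (a i) (a i'))
    (hb : ∀ j j', ¬ Orth d (b j) (b j')) :
    ((∃ i j, Orth d (a i) (b j)) ↔ 3 ≤ (rvGraph n d a b).ediam) ∧
    (∀ i j, (rvGraph n d a b).edist (.va i) (.vb j) ≤ 2 ↔ ¬ Orth d (a i) (b j)) ∧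
    (∀ u v : RVVert n d,
      ¬ ((∃ i, u = .va i) ∧ ∃ j, v = .vb j) →
      ¬ ((∃ j, u = .vb j) ∧ ∃ i, v = .va i) →
      (rvGraph n d a b).edist u v ≤ 2) :=
  ⟨exists_orth_iff_three_le_ediam_rvGraph ha hb, fun _ _ ↦ rvGraph_edist_va_vb_le_two_iff,
    fun _ _ ↦ rvGraph_edist_le_two ha hb⟩

end RVGraph

/-- There is an orthogonal pair iff `diam H ≥ 3`; moreover
`dist_H (a i) (b j) ≤ 2` iff `a i` and `b j` are not orthogonal, and every pair of vertices
not of the form `(a i, b j)` has distance at most `2`. -/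
theorem rvGraph_diameter (n d : ℕ) (hn : 1 ≤ n) (hd : 2 ≤ d)
    (a b : Fin n → ℕ → Bool)
    (ha : ∀ i, a i (d - 1) = true) (hb : ∀ j, b j d = true) :
    ((∃ i j : Fin n, Orth d (a i) (b j)) ↔ 3 ≤ (rvGraph n d a b).ediam) ∧
    (∀ i j : Fin n,
      (rvGraph n d a b).edist (RVVert.va i) (RVVert.vb j) ≤ 2 ↔ ¬ Orth d (a i) (b j)) ∧
    (∀ u v : RVVert n d,
      ¬ ((∃ i, u = RVVert.va i) ∧ (∃ j, v = RVVert.vb j)) →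
      ¬ ((∃ j, u = RVVert.vb j) ∧ (∃ i, v = RVVert.va i)) →
      (rvGraph n d a b).edist u v ≤ 2) :=
  rvGraph_diameter_general
    (fun i i' ↦ not_orth_iff.2 ⟨d - 1, Finset.mem_Icc.2 (by lia), ha i, ha i'⟩)
    (fun j j' ↦ not_orth_iff.2 ⟨d, Finset.mem_Icc.2 (by lia), hb j, hb j'⟩)
end

section
/- The graph G(A) has diameter at most 2d + 4 if and only if there is no pair of indices i ≠ j in [n] such that a_i and a_j are orthogonal. -/
/-- Vertices of the graph `G(A)` for vectors `a₁,…,aₙ ∈ {0,1}^d` (coordinates indexed by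
`Fin d`, cliques `C^T_k, C^B_k` indexed by `Fin (2*d)`): `vT k i`, `vB k i` always exist,
`mT k i`, `mB k i` exist iff `(a i) k = 1`, and `q k` for `k ∈ [d]`. -/
inductive GAVert (n d : ℕ) (a : Fin n → Fin d → Bool) : Type where
  | vT (k : Fin (2 * d)) (i : Fin n)
  | vB (k : Fin (2 * d)) (i : Fin n)
  | mT (k : Fin d) (i : Fin n) (h : a i k = true)
  | mB (k : Fin d) (i : Fin n) (h : a i k = true)
  | q (k : Fin d)

/-- Base relation generating exactly the edges of `G(A)`: each `C^T_k`, `C^B_k`, `M^T_k`,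
`M^B_k` is a clique, there are perfect matchings between consecutive `C^T`s and consecutive
`C^B`s, `m^T_{k,i} ~ v^T_{2k,i}`, `m^B_{k,i} ~ v^B_{2k-1,i}` (in `1`-based indexing, which is
`(k':ℕ) = 2*k+1` resp. `(k':ℕ) = 2*k` in the `0`-based indexing used here), and `q k` is
adjacent to all of `M^T_k ∪ M^B_k`. -/
def gaRel {n d : ℕ} {a : Fin n → Fin d → Bool} : GAVert n d a → GAVert n d a → Prop
  | .vT k i, .vT k' i' => k = k' ∨ ((k' : ℕ) = (k : ℕ) + 1 ∧ i = i')
  | .vB k i, .vB k' i' => k = k' ∨ ((k' : ℕ) = (k : ℕ) + 1 ∧ i = i')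
  | .mT k _ _, .mT k' _ _ => k = k'
  | .mB k _ _, .mB k' _ _ => k = k'
  | .mT k i _, .vT k' i' => (k' : ℕ) = 2 * (k : ℕ) + 1 ∧ i' = i
  | .mB k i _, .vB k' i' => (k' : ℕ) = 2 * (k : ℕ) ∧ i' = i
  | .q k, .mT k' _ _ => k = k'
  | .q k, .mB k' _ _ => k = k'
  | _, _ => False

/-- The graph `G(A)`. -/
def gaGraph (n d : ℕ) (a : Fin n → Fin d → Bool) : SimpleGraph (GAVert n d a) :=
  SimpleGraph.fromRel gaRel

/-!
Think of `vT x i` and `vB y j` as column `x` of row `i` in a top grid and column `y` of row `j` in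
a bottom grid. Inside a grid, a change of row costs one step and moving along a row costs the
number of columns. The grids communicate only through the hubs `q k`, and hub `k` can be entered
from row `i` without a change of row exactly when `a i k = 1`. A crossing through `q k` leaves the
top grid at column `2k+1` and enters the bottom grid at column `2k`; it costs `4` besides the
horizontal moves and the changes of row.

From top column `0` to bottom column `2d-1` the horizontal moves cost at least `2d`, so a walk of
length `2d+4` from row `i` to row `j` cannot change rows, which forces `a i` and `a j` to share a
coordinate. For all but three pairs of top and bottom columns, some `k` brings the horizontal cost
down to `2d-2`, which pays for changing to the all-ones row before the crossing and out of it
afterwards. For the three exceptional pairs the horizontal cost is at most `2d` for every `k`, so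
a shared coordinate suffices.
-/

section EDist

open SimpleGraph

variable {V : Type*} {G : SimpleGraph V} {u v w : V}

lemma edist_le_of_triangle {m k l : ℕ} (huw : G.edist u w ≤ m) (hwv : G.edist w v ≤ k)
    (hl : m + k ≤ l) : G.edist u v ≤ l :=
  calc G.edist u v ≤ G.edist u w + G.edist w v := SimpleGraph.edist_triangle
    _ ≤ m + k := add_le_add huw hwv
    _ ≤ l := mod_cast hl

lemma edist_le_of_triangle_left {m k l : ℕ} (hwu : G.edist w u ≤ m) (hwv : G.edist w v ≤ k)
    (hl : m + k ≤ l) : G.edist u v ≤ l :=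
  edist_le_of_triangle (edist_comm.trans_le hwu) hwv hl

lemma edist_fromRel_le_one {r : V → V → Prop} (h : r u v) : (fromRel r).edist u v ≤ (1 : ℕ) := by
  rw [Nat.cast_one, edist_le_one_iff_adj_or_eq, fromRel_adj]
  tauto

lemma edist_pathGraph_hom_le {m : ℕ} (f : pathGraph m →g G) (x y : Fin m) :
    G.edist (f x) (f y) ≤ Nat.dist x y := by
  wlog hxy : x ≤ y generalizing x y
  · rw [edist_comm, Nat.dist_comm]
    exact this y x (le_of_not_ge hxy)
  obtain ⟨k, hk⟩ := Nat.exists_eq_add_of_le (Fin.le_def.mp hxy)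
  rw [hk, Nat.dist_eq_sub_of_le (Nat.le_add_right _ k), Nat.add_sub_cancel_left]
  clear hxy
  induction k generalizing y with
  | zero =>
    obtain rfl : y = x := Fin.ext hk
    simp
  | succ k ih =>
    let z : Fin m := ⟨x + k, by omega⟩
    have hzy : (pathGraph m).Adj z y := pathGraph_adj.mpr (Or.inl hk.symm)
    exact edist_le_of_triangle (ih z rfl) (edist_eq_one_iff_adj.mpr (f.map_adj hzy)).le le_rfl

lemma le_add_walk_length {f : V → ℕ} (hf : ∀ u v, G.Adj u v → f v ≤ f u + 1) (p : G.Walk u v) :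
    f v ≤ f u + p.length := by
  induction p with
  | nil => simp
  | cons h p ih =>
    have := hf _ _ h
    rw [Walk.length_cons]
    omega

lemma le_add_edist {f : V → ℕ} (hf : ∀ u v, G.Adj u v → f v ≤ f u + 1) (u v : V) :
    (f v : ℕ∞) ≤ f u + G.edist u v := by
  rw [SimpleGraph.edist, ENat.add_iInf]
  exact le_iInf fun p => mod_cast le_add_walk_length hf p

end EDist

/-- Orthogonality of two `0`-`1` vectors: no coordinate is `1` in both. -/
def BoolOrthogonal {ι : Type*} (u v : ι → Bool) : Prop :=
  ¬ ∃ k, u k = true ∧ v k = true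

lemma BoolOrthogonal.of_self {ι : Type*} {u : ι → Bool} (h : BoolOrthogonal u u) (v : ι → Bool) :
    BoolOrthogonal u v :=
  fun ⟨k, hu, _⟩ => h ⟨k, hu, hu⟩

namespace gaGraph

open SimpleGraph

variable {n d : ℕ} {a : Fin n → Fin d → Bool}

/-- Row `i` of the top grid, the path `v^T_{1,i}, …, v^T_{2d,i}`. -/
def topRow (a : Fin n → Fin d → Bool) (i : Fin n) : pathGraph (2 * d) →g gaGraph n d a where
  toFun x := .vT x i
  map_rel' {x y} h := by
    rw [pathGraph_adj] at h
    simp only [gaGraph, fromRel_adj, gaRel, ne_eq, GAVert.vT.injEq, Fin.ext_iff, and_true]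
    omega

/-- Row `i` of the bottom grid, the path `v^B_{1,i}, …, v^B_{2d,i}`. -/
def bottomRow (a : Fin n → Fin d → Bool) (i : Fin n) : pathGraph (2 * d) →g gaGraph n d a where
  toFun x := .vB x i
  map_rel' {x y} h := by
    rw [pathGraph_adj] at h
    simp only [gaGraph, fromRel_adj, gaRel, ne_eq, GAVert.vB.injEq, Fin.ext_iff, and_true]
    omega

lemma edist_vT_vT_le (x y : Fin (2 * d)) (i j : Fin n) :
    (gaGraph n d a).edist (.vT x i) (.vT y j) ≤ (Nat.dist x y + 1 : ℕ) :=
  edist_le_of_triangle (edist_pathGraph_hom_le (topRow a i) x y)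
    (edist_fromRel_le_one (Or.inl rfl)) le_rfl

lemma edist_vB_vB_le (x y : Fin (2 * d)) (i j : Fin n) :
    (gaGraph n d a).edist (.vB x i) (.vB y j) ≤ (Nat.dist x y + 1 : ℕ) :=
  edist_le_of_triangle (edist_pathGraph_hom_le (bottomRow a i) x y)
    (edist_fromRel_le_one (Or.inl rfl)) le_rfl

section Hub

variable {k : Fin d} {i : Fin n}

lemma edist_q_mT_le (h : a i k = true) : (gaGraph n d a).edist (.q k) (.mT k i h) ≤ (1 : ℕ) :=
  edist_fromRel_le_one rfl

lemma edist_q_mB_le (h : a i k = true) : (gaGraph n d a).edist (.q k) (.mB k i h) ≤ (1 : ℕ) :=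
  edist_fromRel_le_one rfl

lemma edist_q_vT_port_le (h : a i k = true) :
    (gaGraph n d a).edist (.q k) (.vT ⟨2 * k + 1, by omega⟩ i) ≤ (2 : ℕ) :=
  edist_le_of_triangle (edist_q_mT_le h) (edist_fromRel_le_one ⟨rfl, rfl⟩) le_rfl

lemma edist_q_vB_port_le (h : a i k = true) :
    (gaGraph n d a).edist (.q k) (.vB ⟨2 * k, by omega⟩ i) ≤ (2 : ℕ) :=
  edist_le_of_triangle (edist_q_mB_le h) (edist_fromRel_le_one ⟨rfl, rfl⟩) le_rfl

lemma edist_q_vT_same_row_le (h : a i k = true) (x : Fin (2 * d)) :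
    (gaGraph n d a).edist (.q k) (.vT x i) ≤ (Nat.dist (2 * k + 1) x + 2 : ℕ) :=
  edist_le_of_triangle (edist_q_vT_port_le h) (edist_pathGraph_hom_le (topRow a i) _ x)
    (Nat.add_comm _ _).le

lemma edist_q_vB_same_row_le (h : a i k = true) (y : Fin (2 * d)) :
    (gaGraph n d a).edist (.q k) (.vB y i) ≤ (Nat.dist (2 * k) y + 2 : ℕ) :=
  edist_le_of_triangle (edist_q_vB_port_le h) (edist_pathGraph_hom_le (bottomRow a i) _ y)
    (Nat.add_comm _ _).le

lemma edist_q_vT_le (h : a i k = true) (x : Fin (2 * d)) (j : Fin n) :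
    (gaGraph n d a).edist (.q k) (.vT x j) ≤ (Nat.dist (2 * k + 1) x + 3 : ℕ) :=
  edist_le_of_triangle (edist_q_vT_same_row_le h x) (edist_fromRel_le_one (Or.inl rfl)) le_rfl

lemma edist_q_vB_le (h : a i k = true) (y : Fin (2 * d)) (j : Fin n) :
    (gaGraph n d a).edist (.q k) (.vB y j) ≤ (Nat.dist (2 * k) y + 3 : ℕ) :=
  edist_le_of_triangle (edist_q_vB_same_row_le h y) (edist_fromRel_le_one (Or.inl rfl)) le_rfl

lemma edist_q_q_le {l : Fin d} (hk : a i k = true) (hl : a i l = true) :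
    (gaGraph n d a).edist (.q k) (.q l) ≤ (Nat.dist (2 * k) (2 * l) + 4 : ℕ) :=
  edist_le_of_triangle (edist_q_vB_same_row_le hk _) (edist_comm.trans_le (edist_q_vB_port_le hl))
    le_rfl

end Hub

section UpperBound

variable {i₀ : Fin n}

lemma eq_v_or_exists_edist_q_le_one (u : GAVert n d a) :
    (∃ x i, u = .vT x i) ∨ (∃ y i, u = .vB y i) ∨
      ∃ k, (gaGraph n d a).edist (.q k) u ≤ (1 : ℕ) := by
  cases u with
  | vT x i => exact Or.inl ⟨x, i, rfl⟩
  | vB y i => exact Or.inr (Or.inl ⟨y, i, rfl⟩)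
  | mT k i h => exact Or.inr (Or.inr ⟨k, edist_q_mT_le h⟩)
  | mB k i h => exact Or.inr (Or.inr ⟨k, edist_q_mB_le h⟩)
  | q k => exact Or.inr (Or.inr ⟨k, by simp⟩)

lemma edist_q_le (hi₀ : ∀ k, a i₀ k = true) (k : Fin d) (v : GAVert n d a) :
    (gaGraph n d a).edist (.q k) v ≤ (2 * d + 3 : ℕ) := by
  rcases eq_v_or_exists_edist_q_le_one v with ⟨y, j, rfl⟩ | ⟨y, j, rfl⟩ | ⟨l, hl⟩
  · refine (edist_q_vT_le (hi₀ k) y j).trans (Nat.cast_le.mpr ?_)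
    rw [Nat.dist]
    omega
  · refine (edist_q_vB_le (hi₀ k) y j).trans (Nat.cast_le.mpr ?_)
    rw [Nat.dist]
    omega
  · refine edist_le_of_triangle (edist_q_q_le (hi₀ k) (hi₀ l)) hl ?_
    rw [Nat.dist]
    omega

lemma edist_le_of_edist_q_le_one (hi₀ : ∀ k, a i₀ k = true) {k : Fin d} {u : GAVert n d a}
    (hu : (gaGraph n d a).edist (.q k) u ≤ (1 : ℕ)) (v : GAVert n d a) :
    (gaGraph n d a).edist u v ≤ (2 * d + 4 : ℕ) :=
  edist_le_of_triangle_left hu (edist_q_le hi₀ k v) (by omega)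

lemma exists_dist_add_dist_add_two_le {x y : ℕ} (hx : x < 2 * d) (hxy : y + 2 < x + 2 * d) :
    ∃ k : Fin d, Nat.dist (2 * k + 1) x + Nat.dist (2 * k) y + 2 ≤ 2 * d := by
  simp only [Nat.dist]
  rcases le_or_gt x y with h | h
  · exact ⟨⟨x / 2, by omega⟩, by simp only; omega⟩
  · exact ⟨⟨(y + 1) / 2, by omega⟩, by simp only; omega⟩

lemma edist_vT_vB_le (hi₀ : ∀ k, a i₀ k = true) {i j : Fin n}
    (hij : ¬ BoolOrthogonal (a i) (a j)) (x y : Fin (2 * d)) :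
    (gaGraph n d a).edist (.vT x i) (.vB y j) ≤ (2 * d + 4 : ℕ) := by
  by_cases hxy : (y : ℕ) + 2 < x + 2 * d
  · obtain ⟨k, hk⟩ := exists_dist_add_dist_add_two_le x.isLt hxy
    exact edist_le_of_triangle_left (edist_q_vT_le (hi₀ k) x i) (edist_q_vB_le (hi₀ k) y j)
      (by omega)
  · obtain ⟨k, hik, hjk⟩ := not_not.mp hij
    refine edist_le_of_triangle_left (edist_q_vT_same_row_le hik x)
      (edist_q_vB_same_row_le hjk y) ?_
    -- Here `x ≤ 1` and `2d - 2 ≤ y`, so no choice of `k` makes the row moves longer than `2d`.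
    simp only [Nat.dist]
    omega

lemma ediam_le (hi₀ : ∀ k, a i₀ k = true) (h : ∀ i j, ¬ BoolOrthogonal (a i) (a j)) :
    (gaGraph n d a).ediam ≤ (2 * d + 4 : ℕ) := by
  have hdist (x y : Fin (2 * d)) : Nat.dist x y + 1 ≤ 2 * d + 4 := by
    rw [Nat.dist]
    omega
  refine ediam_le_of_edist_le fun u v => ?_
  rcases eq_v_or_exists_edist_q_le_one u with ⟨x, i, rfl⟩ | ⟨x, i, rfl⟩ | ⟨k, hu⟩
  · rcases eq_v_or_exists_edist_q_le_one v with ⟨y, j, rfl⟩ | ⟨y, j, rfl⟩ | ⟨l, hv⟩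
    · exact (edist_vT_vT_le x y i j).trans (Nat.cast_le.mpr (hdist x y))
    · exact edist_vT_vB_le hi₀ (h i j) x y
    · exact edist_comm.trans_le (edist_le_of_edist_q_le_one hi₀ hv _)
  · rcases eq_v_or_exists_edist_q_le_one v with ⟨y, j, rfl⟩ | ⟨y, j, rfl⟩ | ⟨l, hv⟩
    · exact edist_comm.trans_le (edist_vT_vB_le hi₀ (h j i) y x)
    · exact (edist_vB_vB_le x y i j).trans (Nat.cast_le.mpr (hdist x y))
    · exact edist_comm.trans_le (edist_le_of_edist_q_le_one hi₀ hv _)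
  · exact edist_le_of_edist_q_le_one hi₀ hu v

end UpperBound

section LowerBound

variable {i j : Fin n}

/-- When `a i` and `a j` are orthogonal, this function changes by at most one along each edge, so
its increments bound distances from below. The first summand is the cost, without any change of
row, of walking rightwards from `vT 0 i`. The `if` adds one where a change of row cannot have been
avoided: at rows of the top grid other than `i`, at hubs `k` with `a i k = 0`, and at row `j` of the
bottom grid, since by orthogonality no hub leads from row `i` directly into row `j`. -/
def potential (i j : Fin n) : GAVert n d a → ℕ
  | .vT x l => x + if l = i then 0 else 1
  | .mT k l _ => 2 * k + 2 + if l = i then 0 else 1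
  | .q k => 2 * k + 3 + if a i k = true then 0 else 1
  | .mB k _ _ => 2 * k + 4 + if a i k = true then 0 else 1
  | .vB y l => y + 5 + if l = j then 1 else 0

lemma potential_le_of_gaRel (hij : BoolOrthogonal (a i) (a j)) {u v : GAVert n d a}
    (h : gaRel u v) :
    potential i j v ≤ potential i j u + 1 ∧ potential i j u ≤ potential i j v + 1 := by
  cases u <;> cases v <;> simp only [gaRel] at h <;> simp only [potential]
  case vT.vT x l y m =>
    rcases h with rfl | ⟨hxy, rfl⟩ <;> split_ifs <;> omega
  case vB.vB x l y m =>
    rcases h with rfl | ⟨hxy, rfl⟩ <;> split_ifs <;> omega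
  case mT.mT k l _ k' m _ =>
    subst h
    split_ifs <;> omega
  case mB.mB k l _ k' m _ =>
    subst h
    split_ifs <;> omega
  case mT.vT k l _ x m =>
    obtain ⟨hx, rfl⟩ := h
    split_ifs <;> omega
  case mB.vB k l hl y m =>
    obtain ⟨hy, rfl⟩ := h
    have hik : m = j → a i k ≠ true := by
      rintro rfl hik
      exact hij ⟨k, hik, hl⟩
    split_ifs <;> first | omega | tauto
  case q.mT k k' l hl =>
    subst h
    have hik : l = i → a i k = true := by
      rintro rfl
      exact hl
    split_ifs <;> first | omega | tauto
  case q.mB k k' l _ =>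
    subst h
    omega

lemma potential_le_of_adj (hij : BoolOrthogonal (a i) (a j)) (u v : GAVert n d a)
    (h : (gaGraph n d a).Adj u v) : potential i j v ≤ potential i j u + 1 := by
  rw [gaGraph, fromRel_adj] at h
  rcases h.2 with h | h
  · exact (potential_le_of_gaRel hij h).1
  · exact (potential_le_of_gaRel hij h).2

lemma le_add_edist_vT_vB (hij : BoolOrthogonal (a i) (a j)) (x y : Fin (2 * d)) :
    ((y + 6 : ℕ) : ℕ∞) ≤ (x : ℕ) + (gaGraph n d a).edist (.vT x i) (.vB y j) := by
  simpa [potential, add_assoc] using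
    le_add_edist (potential_le_of_adj hij) (.vT x i) (.vB y j)

lemma lt_ediam (hd : 1 ≤ d) (hij : BoolOrthogonal (a i) (a j)) :
    ((2 * d + 4 : ℕ) : ℕ∞) < (gaGraph n d a).ediam :=
  let first : Fin (2 * d) := ⟨0, by omega⟩
  let last : Fin (2 * d) := ⟨2 * d - 1, by omega⟩
  calc ((2 * d + 4 : ℕ) : ℕ∞) < (last + 6 : ℕ) := Nat.cast_lt.mpr (by simp only [last]; omega)
    _ ≤ (first : ℕ) + (gaGraph n d a).edist (.vT first i) (.vB last j) :=
      le_add_edist_vT_vB hij first last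
    _ = (gaGraph n d a).edist (.vT first i) (.vB last j) := by simp [first]
    _ ≤ (gaGraph n d a).ediam := edist_le_ediam

end LowerBound

end gaGraph

/-- `G(A)` has diameter at most `2d + 4` iff there is no pair `i ≠ j`
with `a i` and `a j` orthogonal (no coordinate where both are `1`). -/
theorem gaGraph_ediam_le_iff (n d : ℕ) (hn : 1 ≤ n) (hd : 1 ≤ d)
    (a : Fin n → Fin d → Bool) (hall : ∃ i₀ : Fin n, ∀ k : Fin d, a i₀ k = true) :
    (gaGraph n d a).ediam ≤ ((2 * d + 4 : ℕ) : ℕ∞) ↔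
      ¬ ∃ i j : Fin n, i ≠ j ∧ ¬ ∃ k : Fin d, a i k = true ∧ a j k = true := by
  obtain ⟨i₀, hi₀⟩ := hall
  constructor
  · rintro hle ⟨i, j, -, hij⟩
    exact (gaGraph.lt_ediam hd hij).not_ge hle
  · intro h
    have hne {i j : Fin n} (hij : i ≠ j) : ¬ BoolOrthogonal (a i) (a j) :=
      fun hort => h ⟨i, j, hij, hort⟩
    refine gaGraph.ediam_le hi₀ fun i j hort => ?_
    rcases eq_or_ne i j with rfl | hij
    · have hi : i = i₀ := by_contra fun hi => hne hi (hort.of_self (a i₀))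
      subst hi
      exact hort ⟨⟨0, hd⟩, hi₀ _, hi₀ _⟩
    · exact hne hij hort
end

section
/- The graph G(A) can be realized as an intersection graph of unit balls in ℝ³: there exists an injective map c from the vertex set of G(A) to ℝ³ such that two distinct vertices u, v are adjacent in G(A) if and only if the Euclidean distance between c(u) and c(v) is at most 1 (equivalently, the closed balls of diameter 1 centered at c(u) and c(v) intersect). -/
/-!
The index `i` moves a center along the second axis, by at most `1 / 2` in total. The third axis
separates the layers `v^B`, `m^B`, `q`, `m^T`, `v^T`, at heights `-5/3, -2/3, 0, 2/3, 5/3`, and the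
first coordinate is an integer. A unit step along the first axis (between consecutive cliques of
`v^T` or of `v^B`) or in height (between `v` and `m`) uses up the whole distance budget, so it
forces the indices to agree and produces a matching. The height `2/3` between `m` and `q` still
leaves room for every change of index, while the height `4/3` between `m^T` and `m^B` is too much.
-/

lemma intCast_sq_add_le_one_iff {m : ℤ} {s : ℝ} (hs : 0 ≤ s) :
    (m : ℝ) ^ 2 + s ≤ 1 ↔ m = 0 ∧ s ≤ 1 ∨ |m| = 1 ∧ s = 0 := by
  constructor
  · intro h
    have hm : |m| ≤ 1 := by
      rw [← sq_le_one_iff_abs_le_one]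
      exact_mod_cast (by linarith : (m : ℝ) ^ 2 ≤ 1)
    rcases hm.lt_or_eq with hm | hm
    · obtain rfl := Int.abs_lt_one_iff.mp hm
      exact .inl ⟨rfl, by simpa using h⟩
    · have hm_sq : (m : ℝ) ^ 2 = 1 := by
        rw [← sq_abs, ← Int.cast_abs, hm, Int.cast_one, one_pow]
      exact .inr ⟨hm, by linarith⟩
  · rintro (⟨rfl, hs⟩ | ⟨hm, rfl⟩)
    · simpa using hs
    · rw [add_zero, ← sq_abs, ← Int.cast_abs, hm, Int.cast_one, one_pow]

lemma sq_add_intCast_div_three_sq_le_one_iff {t : ℝ} {m : ℤ} (ht : |t| ≤ 1 / 2) :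
    t ^ 2 + ((m : ℝ) / 3) ^ 2 ≤ 1 ↔ |m| < 3 ∨ |m| = 3 ∧ t = 0 := by
  have ht_sq : t ^ 2 ≤ (1 / 2) ^ 2 := sq_le_sq.mpr (by simpa [abs_of_pos] using ht)
  rw [div_pow, ← sq_abs (m : ℝ), ← Int.cast_abs]
  rcases lt_trichotomy |m| 3 with hm | hm | hm
  · have hm_two : ((|m| : ℤ) : ℝ) ≤ 2 := by exact_mod_cast Int.lt_add_one_iff.mp hm
    have hm_sq : ((|m| : ℤ) : ℝ) ^ 2 ≤ 2 ^ 2 := by gcongr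
    simp only [hm, true_or, iff_true]
    linarith
  · rw [hm]
    norm_num [sq_nonpos_iff]
  · have hm_four : (4 : ℝ) ≤ (|m| : ℤ) := by exact_mod_cast Int.add_one_le_iff.mpr hm
    have hm_sq : (4 : ℝ) ^ 2 ≤ ((|m| : ℤ) : ℝ) ^ 2 := by gcongr
    simp only [hm.not_gt, hm.ne', false_and, or_self, iff_false, not_le]
    linarith [sq_nonneg t]

/-- The point of `ℝ³` with integer coordinates `p`, in units of length `1`, `1 / (2 * N)` and
`1 / 3` along the three axes. -/
noncomputable def gridPoint (N : ℕ) (p : ℤ × ℤ × ℤ) : EuclideanSpace ℝ (Fin 3) :=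
  !₂[(p.1 : ℝ), p.2.1 / (2 * N), p.2.2 / 3]

/-- The condition on grid coordinates which, as long as the second ones differ by at most `N`,
expresses that the points `gridPoint N p` and `gridPoint N q` are at distance at most `1`. -/
def GridClose (p q : ℤ × ℤ × ℤ) : Prop :=
  p.1 = q.1 ∧ (|p.2.2 - q.2.2| < 3 ∨ |p.2.2 - q.2.2| = 3 ∧ p.2.1 = q.2.1) ∨
    |p.1 - q.1| = 1 ∧ p.2.1 = q.2.1 ∧ p.2.2 = q.2.2

section Grid

variable {N : ℕ}

lemma dist_gridPoint_sq (p q : ℤ × ℤ × ℤ) :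
    dist (gridPoint N p) (gridPoint N q) ^ 2 =
      ((p.1 - q.1 : ℤ) : ℝ) ^ 2 +
        ((((p.2.1 - q.2.1 : ℤ) : ℝ) / (2 * N)) ^ 2 + (((p.2.2 - q.2.2 : ℤ) : ℝ) / 3) ^ 2) := by
  rw [EuclideanSpace.dist_sq_eq, Fin.sum_univ_three]
  simp [gridPoint, Real.dist_eq, sub_div, add_assoc]

variable [NeZero N]

lemma dist_gridPoint_le_one_iff {p q : ℤ × ℤ × ℤ} (h : |p.2.1 - q.2.1| ≤ N) :
    dist (gridPoint N p) (gridPoint N q) ≤ 1 ↔ GridClose p q := by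
  have hN : (0 : ℝ) < N := Nat.cast_pos.mpr (NeZero.pos N)
  have h_half : |((p.2.1 - q.2.1 : ℤ) : ℝ) / (2 * N)| ≤ 1 / 2 := by
    have h_cast : |((p.2.1 - q.2.1 : ℤ) : ℝ)| ≤ N := by exact_mod_cast h
    rw [abs_div, abs_of_pos (by positivity : (0 : ℝ) < 2 * N), div_le_iff₀ (by positivity)]
    linarith
  have h_zero : ((p.2.1 - q.2.1 : ℤ) : ℝ) / (2 * N) = 0 ↔ p.2.1 = q.2.1 := by
    simp [sub_eq_zero, hN.ne']
  rw [← sq_le_one_iff₀ dist_nonneg, dist_gridPoint_sq, intCast_sq_add_le_one_iff (by positivity),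
    sq_add_intCast_div_three_sq_le_one_iff h_half,
    add_eq_zero_iff_of_nonneg (sq_nonneg _) (sq_nonneg _), sq_eq_zero_iff, h_zero]
  simp [GridClose, sub_eq_zero]

lemma gridPoint_injective : Function.Injective (gridPoint N) := by
  rintro ⟨x, y, z⟩ ⟨x', y', z'⟩ h
  have hx : x = x' := by simpa [gridPoint] using congrArg (· 0) h
  have hy : y = y' := by simpa [gridPoint, NeZero.ne N] using congrArg (· 1) h
  have hz : z = z' := by simpa [gridPoint] using congrArg (· 2) h
  rw [hx, hy, hz]

end Grid

section Realization

variable {n d : ℕ} {a : Fin n → Fin d → Bool}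

/-- Grid coordinates (block, index, height) of the center of a vertex of `G(A)`. The `v^B` are
shifted by one along the first axis so that `v^T_{2k+1}` and `v^B_{2k}` (with `0`-based indices),
the neighbors of `m^T_k` and `m^B_k`, come to lie above and below `q_k`. -/
def gaPosition : GAVert n d a → ℤ × ℤ × ℤ
  | .vT k i => (k, i, 5)
  | .vB k i => (k + 1, i, -5)
  | .mT k i _ => (2 * k + 1, i, 2)
  | .mB k i _ => (2 * k + 1, i, -2)
  | .q k => (2 * k + 1, 0, 0)

lemma gaPosition_injective : Function.Injective (gaPosition : GAVert n d a → ℤ × ℤ × ℤ) := by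
  rintro u v h
  cases u <;> cases v <;> grind [gaPosition]

lemma abs_gaPosition_index_sub_le (u v : GAVert n d a) :
    |(gaPosition u).2.1 - (gaPosition v).2.1| ≤ n := by
  have h_mem (w : GAVert n d a) : (gaPosition w).2.1 ∈ Set.Icc (0 : ℤ) n := by
    cases w <;> simp [gaPosition, Fin.is_le']
  simpa using abs_sub_le_of_le_of_le (h_mem u).1 (h_mem u).2 (h_mem v).1 (h_mem v).2

lemma gaGraph_adj_iff_gridClose {u v : GAVert n d a} (huv : u ≠ v) :
    (gaGraph n d a).Adj u v ↔ GridClose (gaPosition u) (gaPosition v) := by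
  rw [gaGraph, SimpleGraph.fromRel_adj, and_iff_right huv]
  -- Cliques and the edges at `q` have height gap less than `3`, edges between `m` and `v` height
  -- gap `3`, and the matchings between consecutive cliques a first coordinate gap of `1`.
  cases u <;> cases v <;>
    simp only [gaRel, or_false, false_or, false_iff, and_true, gaPosition, GridClose,
      abs_eq_max_neg, Fin.ext_iff, ne_eq, GAVert.q.injEq] at huv ⊢ <;>
    omega

end Realization

theorem gaGraph_realizable_unit_balls_general (n d : ℕ) (a : Fin n → Fin d → Bool) :
    ∃ c : GAVert n d a → EuclideanSpace ℝ (Fin 3),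
      Function.Injective c ∧
      ∀ u v : GAVert n d a, u ≠ v →
        ((gaGraph n d a).Adj u v ↔ dist (c u) (c v) ≤ 1) := by
  refine ⟨gridPoint (n + 1) ∘ gaPosition, gridPoint_injective.comp gaPosition_injective,
    fun u v huv ↦ ?_⟩
  have h_index : |(gaPosition u).2.1 - (gaPosition v).2.1| ≤ (n + 1 : ℕ) :=
    (abs_gaPosition_index_sub_le u v).trans (by simp)
  exact (gaGraph_adj_iff_gridClose huv).trans (dist_gridPoint_le_one_iff h_index).symm

/-- `G(A)` can be realized as an intersection graph of unit
(diameter-`1`) balls in `ℝ³`: there is an injective assignment of centers such that two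
distinct vertices are adjacent iff their centers are at Euclidean distance at most `1`. -/
theorem gaGraph_realizable_unit_balls (n d : ℕ) (hn : 1 ≤ n) (hd : 1 ≤ d)
    (a : Fin n → Fin d → Bool) (hall : ∃ i₀ : Fin n, ∀ k : Fin d, a i₀ k = true) :
    ∃ c : GAVert n d a → EuclideanSpace ℝ (Fin 3),
      Function.Injective c ∧
      ∀ u v : GAVert n d a, u ≠ v →
        ((gaGraph n d a).Adj u v ↔ dist (c u) (c v) ≤ 1) := by
  exact gaGraph_realizable_unit_balls_general n d a
end

section
/- The graph G(A) can be realized as an intersection graph of axis-parallel unit cubes in ℝ³: there exists an injective map c from the vertex set of G(A) to ℝ³ such that two distinct vertices u, v are adjacent in G(A) if and only if the ℓ∞-distance between c(u) and c(v) is at most 1 (equivalently, the closed axis-parallel cubes of side length 1 centered at c(u) and c(v) intersect). -/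
/-!
The index `i` is encoded by a small offset `e i ∈ [0, 1/2)`, with `e` injective. Two centers that
are meant to be matched differ by `1 + (e i - e j)` in one coordinate and by `1 - (e i - e j)` in
another; both are at most `1` in absolute value only if `e i = e j`.

The two chains of cliques run along the diagonal of the `xy`-plane near the heights `-2` and `2`,
the sets `M^T_k` and `M^B_k` lie near the heights `-1` and `1`, and the `q_k` lie at height `0`, so
that only vertices on the same or on consecutive layers can be adjacent. The lower half consists of
the `T`-vertices, and the upper half is its mirror image in the plane `z = 0`; the `B`-chain is
shifted by one step along the diagonal, which puts `v^B_{2k-1}` exactly above `v^T_{2k}`.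
-/

section Points

/-- The center of the cube of a vertex in the `k`-th clique of a chain, for the lower half.
The parameter `s` is the offset encoding the index within the clique. -/
def chainPoint (k : ℕ) (s : ℝ) : Fin 3 → ℝ := ![k + s, k - s, s - 2]

/-- The center of the cube of an `m`-vertex in the lower half. It lies one unit above the chain and
touches the chain only at position `2 * k + 1`, where it selects the offset `s`. -/
noncomputable def hookPoint (k : ℕ) (s : ℝ) : Fin 3 → ℝ := ![2 * k + 1 / 2, 2 * k + 2 - s, s - 1]

/-- The center of the cube of `q_k`, in the mirror plane between the two halves. -/
noncomputable def hubPoint (k : ℕ) : Fin 3 → ℝ := ![2 * k + 1 / 2, 2 * k + 2, 0]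

/-- The reflection of `ℝ³` in the plane `z = 0`, exchanging the `T`-half and the `B`-half. -/
def mirror (x : Fin 3 → ℝ) : Fin 3 → ℝ := ![x 0, x 1, -x 2]

theorem dist_fin_three_le_iff {x y : Fin 3 → ℝ} {r : ℝ} (hr : 0 ≤ r) :
    dist x y ≤ r ↔ |x 0 - y 0| ≤ r ∧ |x 1 - y 1| ≤ r ∧ |x 2 - y 2| ≤ r := by
  simp only [dist_pi_le_iff hr, Fin.forall_fin_succ, Real.dist_eq, Fin.succ_zero_eq_one,
    Fin.succ_one_eq_two, IsEmpty.forall_iff, and_true]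

theorem isometry_mirror : Isometry mirror := by
  refine Isometry.of_dist_eq fun x y => eq_of_forall_ge_iff fun r => ?_
  by_cases hr : 0 ≤ r
  · simp only [dist_fin_three_le_iff hr, mirror, Matrix.cons_val, neg_sub_neg, abs_sub_comm (y 2)]
  · exact iff_of_false (fun h => hr (dist_nonneg.trans h)) fun h => hr (dist_nonneg.trans h)

theorem dist_mirror_hubPoint (x : Fin 3 → ℝ) (k : ℕ) :
    dist (mirror x) (hubPoint k) = dist x (hubPoint k) := by
  have mirror_hubPoint : mirror (hubPoint k) = hubPoint k := by
    simp only [mirror, hubPoint, Matrix.cons_val, neg_zero]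
  rw [← isometry_mirror.dist_eq x, mirror_hubPoint]

theorem chainPoint_inj {k l : ℕ} {s t : ℝ} : chainPoint k s = chainPoint l t ↔ k = l ∧ s = t := by
  refine ⟨fun h => ?_, fun ⟨hk, hs⟩ => hk ▸ hs ▸ rfl⟩
  have hx : k + s = l + t := congrFun h 0
  have hz : s - 2 = t - 2 := congrFun h 2
  have hs : s = t := by linarith
  exact ⟨by rify; linarith, hs⟩

theorem hookPoint_inj {k l : ℕ} {s t : ℝ} : hookPoint k s = hookPoint l t ↔ k = l ∧ s = t := by
  refine ⟨fun h => ?_, fun ⟨hk, hs⟩ => hk ▸ hs ▸ rfl⟩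
  have hx : 2 * k + 1 / 2 = 2 * (l : ℝ) + 1 / 2 := congrFun h 0
  have hz : s - 1 = t - 1 := congrFun h 2
  exact ⟨by rify; linarith, by linarith⟩

theorem hubPoint_injective : Function.Injective hubPoint := fun k l h => by
  have hx : 2 * k + 1 / 2 = 2 * (l : ℝ) + 1 / 2 := congrFun h 0
  rify
  linarith

theorem abs_one_add_le_one_and_abs_one_sub_le_one_iff {x : ℝ} :
    |1 + x| ≤ 1 ∧ |1 - x| ≤ 1 ↔ x = 0 := by
  refine ⟨fun ⟨hadd, hsub⟩ => ?_, fun hx => by simp [hx]⟩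
  linarith [(abs_le.1 hadd).2, (abs_le.1 hsub).2]

theorem abs_two_mul_natCast_sub_le_one_iff {k l : ℕ} (c : ℝ) :
    |2 * (k : ℝ) + c - (2 * l + c)| ≤ 1 ↔ k = l := by
  refine ⟨fun h => ?_, fun hkl => by simp [hkl]⟩
  obtain ⟨hl, hk⟩ := abs_le.1 h
  have : k < l + 1 := by rify; linarith
  have : l < k + 1 := by rify; linarith
  omega

theorem dist_chainPoint_succ_le_one_iff {k : ℕ} {s t : ℝ} :
    dist (chainPoint k s) (chainPoint (k + 1) t) ≤ 1 ↔ s = t := by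
  have hx : k + s - ((k + 1 : ℕ) + t) = -(1 + (t - s)) := by push_cast; ring
  have hy : k - s - ((k + 1 : ℕ) - t) = -(1 - (t - s)) := by push_cast; ring
  simp only [dist_fin_three_le_iff zero_le_one, chainPoint, Matrix.cons_val, hx, hy, abs_neg,
    ← and_assoc, abs_one_add_le_one_and_abs_one_sub_le_one_iff, sub_eq_zero, eq_comm (a := t)]
  exact and_iff_left_of_imp fun hst => by simp [hst]

theorem dist_chainPoint_le_one_iff {k l : ℕ} {s t : ℝ} (hst : |s - t| < 1) :
    dist (chainPoint k s) (chainPoint l t) ≤ 1 ↔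
      k = l ∨ (l = k + 1 ∧ s = t) ∨ (k = l + 1 ∧ t = s) := by
  obtain ⟨hst_lower, hst_upper⟩ := abs_lt.1 hst
  constructor
  · intro h
    have hx : |k + s - (l + t)| ≤ 1 := ((dist_fin_three_le_iff zero_le_one).1 h).1
    rw [abs_le] at hx
    have hl : l < k + 2 := by rify; linarith
    have hk : k < l + 2 := by rify; linarith
    obtain rfl | rfl | rfl : k = l ∨ l = k + 1 ∨ k = l + 1 := by omega
    · exact .inl rfl
    · exact .inr (.inl ⟨rfl, dist_chainPoint_succ_le_one_iff.1 h⟩)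
    · exact .inr (.inr ⟨rfl, dist_chainPoint_succ_le_one_iff.1 ((dist_comm _ _).trans_le h)⟩)
  · rintro (rfl | ⟨rfl, heq⟩ | ⟨rfl, heq⟩)
    · simp only [dist_fin_three_le_iff zero_le_one, chainPoint, Matrix.cons_val, abs_le]
      refine ⟨⟨?_, ?_⟩, ⟨?_, ?_⟩, ?_, ?_⟩ <;> linarith
    · exact dist_chainPoint_succ_le_one_iff.2 heq
    · exact (dist_comm _ _).trans_le (dist_chainPoint_succ_le_one_iff.2 heq)

theorem dist_chainPoint_two_mul_add_one_hookPoint_le_one_iff {k : ℕ} {s t : ℝ}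
    (hs : s ∈ Set.Icc 0 (1 / 2)) :
    dist (chainPoint (2 * k + 1) s) (hookPoint k t) ≤ 1 ↔ s = t := by
  have hx : |((2 * k + 1 : ℕ) : ℝ) + s - (2 * k + 1 / 2)| ≤ 1 := by
    push_cast
    rw [abs_le]
    constructor <;> linarith [hs.1, hs.2]
  have hy : ((2 * k + 1 : ℕ) : ℝ) - s - (2 * k + 2 - t) = -(1 + (s - t)) := by push_cast; ring
  have hz : s - 2 - (t - 1) = -(1 - (s - t)) := by ring
  simp only [dist_fin_three_le_iff zero_le_one, chainPoint, hookPoint, Matrix.cons_val, hx, hy, hz,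
    abs_neg, true_and, abs_one_add_le_one_and_abs_one_sub_le_one_iff, sub_eq_zero]

theorem dist_chainPoint_hookPoint_le_one_iff {k l : ℕ} {s t : ℝ} (hs : s ∈ Set.Icc 0 (1 / 2))
    (hst : |s - t| < 1) :
    dist (chainPoint k s) (hookPoint l t) ≤ 1 ↔ k = 2 * l + 1 ∧ s = t := by
  suffices dist (chainPoint k s) (hookPoint l t) ≤ 1 → k = 2 * l + 1 by
    refine ⟨fun h => ?_, ?_⟩
    · obtain rfl := this h
      exact ⟨rfl, (dist_chainPoint_two_mul_add_one_hookPoint_le_one_iff hs).1 h⟩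
    · rintro ⟨rfl, heq⟩
      exact (dist_chainPoint_two_mul_add_one_hookPoint_le_one_iff hs).2 heq
  intro h
  obtain ⟨hx, hy, -⟩ := (dist_fin_three_le_iff zero_le_one).1 h
  simp only [chainPoint, hookPoint, Matrix.cons_val, abs_le] at hx hy
  have : k < 2 * l + 2 := by rify; linarith [hs.1]
  have : 2 * l < k := by rify; linarith [(abs_lt.1 hst).1]
  omega

theorem dist_hookPoint_le_one_iff {k l : ℕ} {s t : ℝ} (hst : |s - t| ≤ 1) :
    dist (hookPoint k s) (hookPoint l t) ≤ 1 ↔ k = l := by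
  simp only [dist_fin_three_le_iff zero_le_one, hookPoint, Matrix.cons_val,
    abs_two_mul_natCast_sub_le_one_iff, sub_sub_sub_cancel_right, hst, and_true]
  refine and_iff_left_of_imp ?_
  rintro rfl
  rwa [sub_sub_sub_cancel_left, abs_sub_comm]

theorem dist_hookPoint_hubPoint_le_one_iff {k l : ℕ} {s : ℝ} (hs : s ∈ Set.Icc 0 1) :
    dist (hookPoint k s) (hubPoint l) ≤ 1 ↔ k = l := by
  simp only [dist_fin_three_le_iff zero_le_one, hookPoint, hubPoint, Matrix.cons_val,
    abs_two_mul_natCast_sub_le_one_iff]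
  refine and_iff_left_of_imp ?_
  rintro rfl
  simp only [abs_le]
  refine ⟨⟨?_, ?_⟩, ?_, ?_⟩ <;> linarith [hs.1, hs.2]

theorem dist_hubPoint_le_one_iff {k l : ℕ} : dist (hubPoint k) (hubPoint l) ≤ 1 ↔ k = l := by
  refine ⟨fun h => ?_, fun hkl => by simp [hkl]⟩
  exact (abs_two_mul_natCast_sub_le_one_iff _).1 ((dist_fin_three_le_iff zero_le_one).1 h).1

end Points

namespace GAVert

variable {n d : ℕ} {a : Fin n → Fin d → Bool} {e : Fin n → ℝ} {u v : GAVert n d a}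

/-- The approximate height of the center of a vertex: the lower half has negative layers. -/
def layer : GAVert n d a → ℤ
  | vT _ _ => -2
  | mT _ _ _ => -1
  | q _ => 0
  | mB _ _ _ => 1
  | vB _ _ => 2

/-- The center of the cube representing a vertex, where `e i` is the offset encoding the
index `i`. -/
noncomputable def center (e : Fin n → ℝ) : GAVert n d a → Fin 3 → ℝ
  | vT k i => chainPoint k (e i)
  | mT k i _ => hookPoint k (e i)
  | q k => hubPoint k
  | mB k i _ => mirror (hookPoint k (e i))
  | vB k i => mirror (chainPoint (k + 1) (e i))

theorem abs_offset_sub_lt_one (he : ∀ i, e i ∈ Set.Ico 0 (1 / 2)) (i j : Fin n) :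
    |e i - e j| < 1 :=
  (abs_sub_lt_of_nonneg_of_lt (he i).1 (he i).2 (he j).1 (he j).2).trans one_half_lt_one

theorem abs_center_two_sub_layer_lt (he : ∀ i, e i ∈ Set.Ico 0 (1 / 2)) (u : GAVert n d a) :
    |u.center e 2 - u.layer| < 1 / 2 := by
  rw [abs_lt]
  rcases u with ⟨k, i⟩ | ⟨k, i⟩ | ⟨k, i, hi⟩ | ⟨k, i, hi⟩ | k
  case q => simp only [center, layer, hubPoint, Matrix.cons_val]; norm_num
  all_goals
    obtain ⟨he0, he1⟩ := he i
    simp only [center, layer, chainPoint, hookPoint, mirror, Matrix.cons_val]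
    push_cast
    constructor <;> linarith

theorem layer_eq_of_center_eq (he : ∀ i, e i ∈ Set.Ico 0 (1 / 2))
    (h : u.center e = v.center e) : u.layer = v.layer := by
  have hu := abs_lt.1 (abs_center_two_sub_layer_lt he u)
  have hv := abs_lt.1 (abs_center_two_sub_layer_lt he v)
  rw [h] at hu
  have : u.layer < v.layer + 1 := by rify; linarith
  have : v.layer < u.layer + 1 := by rify; linarith
  omega

theorem center_injective (he : ∀ i, e i ∈ Set.Ico 0 (1 / 2)) (hinj : Function.Injective e) :
    Function.Injective (center (a := a) e) := by
  intro u v h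
  have hlayer := layer_eq_of_center_eq he h
  match u, v, hlayer with
  | .vT k i, .vT l j, _ =>
    obtain ⟨hk, hi⟩ := chainPoint_inj.1 h
    rw [Fin.ext hk, hinj hi]
  | .vB k i, .vB l j, _ =>
    obtain ⟨hk, hi⟩ := chainPoint_inj.1 (isometry_mirror.injective h)
    rw [Fin.ext (Nat.succ_injective hk), hinj hi]
  | .mT k i hi, .mT l j hj, _ =>
    obtain ⟨hk, hi⟩ := hookPoint_inj.1 h
    obtain rfl := Fin.ext hk
    obtain rfl := hinj hi
    rfl
  | .mB k i hi, .mB l j hj, _ =>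
    obtain ⟨hk, hi⟩ := hookPoint_inj.1 (isometry_mirror.injective h)
    obtain rfl := Fin.ext hk
    obtain rfl := hinj hi
    rfl
  | .q k, .q l, _ =>
    rw [Fin.ext (hubPoint_injective h)]

theorem one_lt_dist_center_of_layer_add_two_le (he : ∀ i, e i ∈ Set.Ico 0 (1 / 2))
    (h : u.layer + 2 ≤ v.layer) : 1 < dist (u.center e) (v.center e) := by
  have hu := abs_lt.1 (abs_center_two_sub_layer_lt he u)
  have hv := abs_lt.1 (abs_center_two_sub_layer_lt he v)
  have hz : |u.center e 2 - v.center e 2| ≤ dist (u.center e) (v.center e) :=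
    dist_le_pi_dist (u.center e) (v.center e) 2
  rify at h
  linarith [neg_abs_le (u.center e 2 - v.center e 2)]

theorem abs_layer_sub_le_one_of_adj (h : (gaGraph n d a).Adj u v) :
    |u.layer - v.layer| ≤ 1 := by
  rcases u <;> rcases v <;> simp_all [gaGraph, gaRel, layer]

theorem gaRel_or_gaRel_iff_of_layer_eq (he : ∀ i, e i ∈ Set.Ico 0 (1 / 2))
    (hinj : Function.Injective e) (h : u.layer = v.layer) (huv : u ≠ v) :
    gaRel u v ∨ gaRel v u ↔ dist (u.center e) (v.center e) ≤ 1 := by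
  match u, v, h with
  | .vT k i, .vT l j, _ =>
    simp only [gaRel, center, dist_chainPoint_le_one_iff (abs_offset_sub_lt_one he i j),
      hinj.eq_iff, Fin.ext_iff]
    omega
  | .vB k i, .vB l j, _ =>
    simp only [gaRel, center, isometry_mirror.dist_eq,
      dist_chainPoint_le_one_iff (abs_offset_sub_lt_one he i j), hinj.eq_iff, Fin.ext_iff]
    omega
  | .mT k i hi, .mT l j hj, _ =>
    simp only [gaRel, center, Fin.ext_iff, eq_comm (a := (l : ℕ)), or_self,
      dist_hookPoint_le_one_iff (abs_offset_sub_lt_one he i j).le]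
  | .mB k i hi, .mB l j hj, _ =>
    simp only [gaRel, center, Fin.ext_iff, eq_comm (a := (l : ℕ)), or_self,
      isometry_mirror.dist_eq, dist_hookPoint_le_one_iff (abs_offset_sub_lt_one he i j).le]
  | .q k, .q l, _ =>
    simpa only [gaRel, center, dist_hubPoint_le_one_iff, or_self, false_iff, ← Fin.ext_iff, ne_eq,
      q.injEq] using huv

theorem gaRel_or_gaRel_iff_of_layer_eq_add_one (he : ∀ i, e i ∈ Set.Ico 0 (1 / 2))
    (hinj : Function.Injective e) (h : v.layer = u.layer + 1) :
    gaRel u v ∨ gaRel v u ↔ dist (u.center e) (v.center e) ≤ 1 := by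
  have mem_Icc_half (i) : e i ∈ Set.Icc 0 (1 / 2) := Set.Ico_subset_Icc_self (he i)
  have mem_Icc_one (i) : e i ∈ Set.Icc 0 1 :=
    Set.Icc_subset_Icc_right one_half_lt_one.le (mem_Icc_half i)
  match u, v, h with
  | .vT k i, .mT l j hj, _ =>
    simp only [gaRel, center, false_or, hinj.eq_iff,
      dist_chainPoint_hookPoint_le_one_iff (mem_Icc_half i) (abs_offset_sub_lt_one he i j)]
  | .mT k i hi, .q l, _ =>
    simp only [gaRel, center, false_or, dist_hookPoint_hubPoint_le_one_iff (mem_Icc_one i),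
      Fin.ext_iff, eq_comm]
  | .mB k i hi, .vB l j, _ =>
    simp only [gaRel, center, or_false, isometry_mirror.dist_eq, dist_comm (hookPoint _ _),
      dist_chainPoint_hookPoint_le_one_iff (mem_Icc_half j) (abs_offset_sub_lt_one he j i),
      hinj.eq_iff, add_left_inj]
  | .q k, .mB l j hj, _ =>
    simp only [gaRel, center, or_false, dist_comm (hubPoint _), dist_mirror_hubPoint,
      dist_hookPoint_hubPoint_le_one_iff (mem_Icc_one j), Fin.ext_iff, eq_comm]

theorem gaGraph_adj_iff_dist_center_le_one (he : ∀ i, e i ∈ Set.Ico 0 (1 / 2))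
    (hinj : Function.Injective e) (huv : u ≠ v) :
    (gaGraph n d a).Adj u v ↔ dist (u.center e) (v.center e) ≤ 1 := by
  wlog hle : u.layer ≤ v.layer generalizing u v
  · rw [SimpleGraph.adj_comm, dist_comm]
    exact this huv.symm (le_of_not_ge hle)
  have adj_iff : (gaGraph n d a).Adj u v ↔ gaRel u v ∨ gaRel v u := and_iff_right huv
  obtain heq | hsucc | hfar :
      u.layer = v.layer ∨ v.layer = u.layer + 1 ∨ u.layer + 2 ≤ v.layer := by omega
  · exact adj_iff.trans (gaRel_or_gaRel_iff_of_layer_eq he hinj heq huv)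
  · exact adj_iff.trans (gaRel_or_gaRel_iff_of_layer_eq_add_one he hinj hsucc)
  · refine iff_of_false (fun hadj => ?_) (one_lt_dist_center_of_layer_add_two_le he hfar).not_ge
    have := abs_le.1 (abs_layer_sub_le_one_of_adj hadj)
    omega

end GAVert

theorem exists_injective_mem_Ico {ι : Type*} [Countable ι] {x y : ℝ} (hxy : x < y) :
    ∃ e : ι → ℝ, Function.Injective e ∧ ∀ i, e i ∈ Set.Ico x y := by
  obtain ⟨f, hf⟩ := exists_injective_nat ι
  let g := (Set.Ico_infinite hxy).natEmbedding
  exact ⟨fun i => g (f i), Subtype.val_injective.comp (g.injective.comp hf), fun i => (g (f i)).2⟩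

theorem gaGraph_realizable_unit_cubes_general (n d : ℕ) (a : Fin n → Fin d → Bool) :
    ∃ c : GAVert n d a → (Fin 3 → ℝ),
      Function.Injective c ∧
      ∀ u v : GAVert n d a, u ≠ v →
        ((gaGraph n d a).Adj u v ↔ dist (c u) (c v) ≤ 1) := by
  obtain ⟨e, hinj, he⟩ := exists_injective_mem_Ico (ι := Fin n) one_half_pos
  exact ⟨GAVert.center e, GAVert.center_injective he hinj, fun _ _ =>
    GAVert.gaGraph_adj_iff_dist_center_le_one he hinj⟩

/-- `G(A)` can be realized as an intersection graph of axis-parallel unit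
cubes in `ℝ³`: there is an injective assignment of centers such that two distinct vertices
are adjacent iff their centers are at `ℓ∞`-distance at most `1` (the distance on `Fin 3 → ℝ`
is the sup-metric). -/
theorem gaGraph_realizable_unit_cubes (n d : ℕ) (hn : 1 ≤ n) (hd : 1 ≤ d)
    (a : Fin n → Fin d → Bool) (hall : ∃ i₀ : Fin n, ∀ k : Fin d, a i₀ k = true) :
    ∃ c : GAVert n d a → (Fin 3 → ℝ),
      Function.Injective c ∧
      ∀ u v : GAVert n d a, u ≠ v →
        ((gaGraph n d a).Adj u v ↔ dist (c u) (c v) ≤ 1) :=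
  gaGraph_realizable_unit_cubes_general n d a
end

section
/- The graph G'(A) can be realized as an intersection graph of axis-parallel unit segments in the plane: there exists an injective assignment of a closed axis-parallel (horizontal or vertical) segment of length 1 in ℝ² to each vertex of G'(A) such that two distinct vertices are adjacent in G'(A) if and only if their segments have a common point. -/
/-- Vertices of the graph `G'(A)` for vectors `a₁,…,aₙ ∈ {0,1}^d` (coordinates indexed by
`Fin d`, the independent sets `C^T_k, C^B_k` indexed by `Fin (2*d)`): `vT k i`, `vB k i`
always exist, `mT k i`, `mB k i` exist iff `(a i) k = 1`, and `q k` for `k ∈ [d]`. -/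
inductive GpAVert (n d : ℕ) (a : Fin n → Fin d → Bool) : Type where
  | vT (k : Fin (2 * d)) (i : Fin n)
  | vB (k : Fin (2 * d)) (i : Fin n)
  | mT (k : Fin d) (i : Fin n) (h : a i k = true)
  | mB (k : Fin d) (i : Fin n) (h : a i k = true)
  | q (k : Fin d)

/-- Base relation generating exactly the edges of `G'(A)` (indices inside the relation are
`0`-based, so in `1`-based terms: matchings between consecutive `C^T`s and `C^B`s;
`m^T_{k,i} ~ v^T_{2k,i}` and, whenever `k ≤ d−1`, `m^T_{k,i} ~ v^T_{2k+1,j}` for all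
`j ≤ i`; `m^B_{k,i} ~ v^B_{2k−1,i}` and, whenever `k ≥ 2`, `m^B_{k,i} ~ v^B_{2k−2,j}` for
all `j ≥ i`; and `q k` adjacent to all of `M^T_k ∪ M^B_k`).  The sets `C^T_k, C^B_k, M^T_k,
M^B_k` are independent sets. -/
def gpaRel {n d : ℕ} {a : Fin n → Fin d → Bool} : GpAVert n d a → GpAVert n d a → Prop
  | .vT k i, .vT k' i' => (k' : ℕ) = (k : ℕ) + 1 ∧ i = i'
  | .vB k i, .vB k' i' => (k' : ℕ) = (k : ℕ) + 1 ∧ i = i'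
  | .mT k i _, .vT k' j =>
      ((k' : ℕ) = 2 * (k : ℕ) + 1 ∧ j = i) ∨ ((k' : ℕ) = 2 * (k : ℕ) + 2 ∧ j ≤ i)
  | .mB k i _, .vB k' j =>
      ((k' : ℕ) = 2 * (k : ℕ) ∧ j = i) ∨ ((k' : ℕ) + 1 = 2 * (k : ℕ) ∧ i ≤ j)
  | .q k, .mT k' _ _ => k = k'
  | .q k, .mB k' _ _ => k = k'
  | _, _ => False

/-- The graph `G'(A)`. -/
def gpaGraph (n d : ℕ) (a : Fin n → Fin d → Bool) : SimpleGraph (GpAVert n d a) :=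
  SimpleGraph.fromRel gpaRel

/-!
Give the indices of the top side strictly increasing shifts in `[1/2, 1)` and those of the bottom
side strictly increasing shifts in `[0, 1/2)`, and move every segment by its shift along the
diagonal. Every `m_{c,i}` becomes a vertical segment with lower endpoint `(c + t, t)`, where `c` is
an even column and `t` the shift of `i`; it crosses the height `1`, where `q` is placed.
A horizontal unit segment whose left endpoint has abscissa `l + s` can meet it only for `c = l` or
`c = l + 1`: since `c + t` must lie in `[l + s, l + s + 1]`, the first case needs `s ≤ t` and the
second `t ≤ s`. At the height `s + 1` of a top segment the vertical one is reached only if `s ≤ t`,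
and at the height `s` of a bottom segment only if `t ≤ s`. So one of the two columns gives a
half graph and the other collapses to the matching `s = t`.
-/

open Set

/-- The horizontal segment of length `1` with left endpoint `(x, y)`. -/
def horizontalUnitSegment (x y : ℝ) : Set (ℝ × ℝ) :=
  segment ℝ (x, y) (x + 1, y)

/-- The vertical segment of length `1` with lower endpoint `(x, y)`. -/
def verticalUnitSegment (x y : ℝ) : Set (ℝ × ℝ) :=
  segment ℝ (x, y) (x, y + 1)

section UnitSegments

variable {x y x' y' : ℝ}

theorem horizontalUnitSegment_eq_prod (x y : ℝ) :
    horizontalUnitSegment x y = Icc x (x + 1) ×ˢ {y} := by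
  rw [horizontalUnitSegment, ← Prod.image_mk_segment_left, segment_eq_Icc (by linarith),
    prod_singleton]

theorem verticalUnitSegment_eq_prod (x y : ℝ) :
    verticalUnitSegment x y = {x} ×ˢ Icc y (y + 1) := by
  rw [verticalUnitSegment, ← Prod.image_mk_segment_right, segment_eq_Icc (by linarith),
    singleton_prod]

theorem horizontal_inter_horizontal_nonempty :
    (horizontalUnitSegment x y ∩ horizontalUnitSegment x' y').Nonempty ↔
      y = y' ∧ x ≤ x' + 1 ∧ x' ≤ x + 1 := by
  simp only [horizontalUnitSegment_eq_prod, prod_inter_prod, prod_nonempty_iff, Icc_inter_Icc,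
    nonempty_Icc, singleton_inter_nonempty, mem_singleton_iff]
  grind

theorem vertical_inter_vertical_nonempty :
    (verticalUnitSegment x y ∩ verticalUnitSegment x' y').Nonempty ↔
      x = x' ∧ y ≤ y' + 1 ∧ y' ≤ y + 1 := by
  simp only [verticalUnitSegment_eq_prod, prod_inter_prod, prod_nonempty_iff, Icc_inter_Icc,
    nonempty_Icc, singleton_inter_nonempty, mem_singleton_iff]
  grind

theorem vertical_inter_horizontal_nonempty :
    (verticalUnitSegment x y ∩ horizontalUnitSegment x' y').Nonempty ↔
      x ∈ Icc x' (x' + 1) ∧ y' ∈ Icc y (y + 1) := by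
  rw [verticalUnitSegment_eq_prod, horizontalUnitSegment_eq_prod, prod_inter_prod,
    prod_nonempty_iff, singleton_inter_nonempty, inter_singleton_nonempty]

theorem horizontalUnitSegment_ne_verticalUnitSegment :
    horizontalUnitSegment x y ≠ verticalUnitSegment x' y' := by
  intro h
  have hleft : (x, y) ∈ verticalUnitSegment x' y' := h ▸ left_mem_segment ℝ _ _
  have hright : (x + 1, y) ∈ verticalUnitSegment x' y' := h ▸ right_mem_segment ℝ _ _
  simp only [verticalUnitSegment_eq_prod, mem_prod, mem_singleton_iff] at hleft hright
  linarith

theorem left_eq_of_horizontalUnitSegment_eq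
    (h : horizontalUnitSegment x y = horizontalUnitSegment x' y') : x = x' := by
  have hx : (x, y) ∈ horizontalUnitSegment x' y' := h ▸ left_mem_segment ℝ _ _
  have hx' : (x', y') ∈ horizontalUnitSegment x y := h ▸ left_mem_segment ℝ _ _
  simp only [horizontalUnitSegment_eq_prod, mem_prod, mem_Icc] at hx hx'
  exact le_antisymm hx'.1.1 hx.1.1

end UnitSegments

section ShiftedColumns

variable {c l : ℕ} {s t : ℝ}

theorem natCast_add_inj_of_mem_Ico (hs : s ∈ Ico 0 1) (ht : t ∈ Ico 0 1) :
    c + s = l + t ↔ c = l ∧ s = t := by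
  refine ⟨fun h => ?_, by rintro ⟨rfl, rfl⟩; rfl⟩
  have hcl : c < l + 1 := by rify; linarith [hs.1, ht.2]
  have hlc : l < c + 1 := by rify; linarith [hs.2, ht.1]
  obtain rfl : c = l := by omega
  exact ⟨rfl, add_left_cancel h⟩

theorem natCast_add_mem_Icc_iff_of_le (hst : s ≤ t) (hts : t < s + 1) :
    c + t ∈ Icc (l + s) (l + s + 1) ↔ c = l ∨ (c = l + 1 ∧ s = t) := by
  constructor
  · rintro ⟨hleft, hright⟩
    have hlc : l < c + 1 := by rify; linarith
    have hcl : c ≤ l + 1 := by rify; linarith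
    obtain rfl | rfl : c = l ∨ c = l + 1 := by omega
    · exact .inl rfl
    · push_cast at hright
      exact .inr ⟨rfl, by linarith⟩
  · rintro (rfl | ⟨rfl, rfl⟩)
    · constructor <;> linarith
    · push_cast
      constructor <;> linarith

theorem natCast_add_mem_Icc_iff_of_ge (hts : t ≤ s) (hst : s < t + 1) :
    c + t ∈ Icc (l + s) (l + s + 1) ↔ (c = l ∧ s = t) ∨ c = l + 1 := by
  have hswap : c + t ∈ Icc (l + s) (l + s + 1) ↔
      (l + 1 : ℕ) + s ∈ Icc (c + t) (c + t + 1) := by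
    push_cast [mem_Icc]
    constructor <;> rintro ⟨hleft, hright⟩ <;> constructor <;> linarith
  rw [hswap, natCast_add_mem_Icc_iff_of_le hts hst]
  grind

theorem vertical_inter_horizontal_top_nonempty (hts : t < s + 1) :
    (verticalUnitSegment (c + t) t ∩ horizontalUnitSegment (l + s) (s + 1)).Nonempty ↔
      (c = l ∧ s ≤ t) ∨ (c = l + 1 ∧ s = t) := by
  have hheight : s + 1 ∈ Icc t (t + 1) ↔ s ≤ t := by simp [hts.le]
  rw [vertical_inter_horizontal_nonempty, hheight,
    and_congr_left fun hle => natCast_add_mem_Icc_iff_of_le hle hts]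
  grind

theorem vertical_inter_horizontal_bottom_nonempty (hst : s < t + 1) :
    (verticalUnitSegment (c + t) t ∩ horizontalUnitSegment (l + s) s).Nonempty ↔
      (c = l ∧ s = t) ∨ (c = l + 1 ∧ t ≤ s) := by
  have hheight : s ∈ Icc t (t + 1) ↔ t ≤ s := by simp [hst.le]
  rw [vertical_inter_horizontal_nonempty, hheight,
    and_congr_left fun hle => natCast_add_mem_Icc_iff_of_ge hle hst]
  grind

theorem vertical_inter_horizontal_one_nonempty (ht : t ∈ Ico 0 1) :
    (verticalUnitSegment (c + t) t ∩ horizontalUnitSegment l 1).Nonempty ↔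
      c = l ∨ (c = l + 1 ∧ 0 = t) := by
  obtain ⟨hpos, hlt⟩ := ht
  have hmeet := vertical_inter_horizontal_top_nonempty (c := c) (l := l) (s := 0) (t := t)
    (by rwa [zero_add])
  simpa only [zero_add, add_zero, hpos, and_true] using hmeet

theorem vertical_inter_vertical_nonempty_of_mem_Ico (hs : s ∈ Ico 0 1) (ht : t ∈ Ico 0 1) :
    (verticalUnitSegment (c + s) s ∩ verticalUnitSegment (l + t) t).Nonempty ↔
      c = l ∧ s = t := by
  rw [vertical_inter_vertical_nonempty, natCast_add_inj_of_mem_Ico hs ht]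
  grind

theorem horizontal_inter_horizontal_nonempty_of_iff {y y' : ℝ} (hy : y = y' ↔ s = t) :
    (horizontalUnitSegment (c + s) y ∩ horizontalUnitSegment (l + t) y').Nonempty ↔
      s = t ∧ c ≤ l + 1 ∧ l ≤ c + 1 := by
  rw [horizontal_inter_horizontal_nonempty, hy]
  rify
  grind

end ShiftedColumns

namespace GpAVert

variable {n d : ℕ} (a : Fin n → Fin d → Bool)
  (bot : Fin n ↪o Ico (0 : ℝ) (1 / 2)) (top : Fin n ↪o Ico (1 / 2 : ℝ) 1)

/-- The unit segment realizing a vertex of `G'(A)`, where `bot i` and `top i` are the shifts of the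
index `i` on the two sides. Since the levels `k` count from `0`, the column `2 * k + 2` of `M^T_k`
is that of the half-graph neighbours `C^T_{2k+2}`. The offset `2` in the columns of the `v^B`
places `M^B_k` in the same column as `M^T_k`, within reach of `q k`. -/
def unitSegment : GpAVert n d a → Set (ℝ × ℝ)
  | vT k i => horizontalUnitSegment ((k : ℕ) + top i) (top i + 1)
  | vB k i => horizontalUnitSegment ((k + 2 : ℕ) + bot i) (bot i)
  | mT k i _ => verticalUnitSegment ((2 * k + 2 : ℕ) + top i) (top i)
  | mB k i _ => verticalUnitSegment ((2 * k + 2 : ℕ) + bot i) (bot i)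
  | q k => horizontalUnitSegment (2 * k + 2 : ℕ) 1

theorem exists_unitSegment_eq_segment (u : GpAVert n d a) :
    ∃ x y : ℝ × ℝ, unitSegment a bot top u = segment ℝ x y ∧
      ((x.1 = y.1 ∧ |x.2 - y.2| = 1) ∨ (x.2 = y.2 ∧ |x.1 - y.1| = 1)) := by
  cases u <;> exact ⟨_, _, rfl, by simp⟩

theorem bot_mem_Ico (i : Fin n) : (bot i : ℝ) ∈ Ico 0 1 :=
  ⟨(bot i).2.1, by linarith [(bot i).2.2]⟩

theorem top_mem_Ico (i : Fin n) : (top i : ℝ) ∈ Ico 0 1 :=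
  ⟨by linarith [(top i).2.1], (top i).2.2⟩

theorem bot_lt_top (i j : Fin n) : (bot i : ℝ) < top j :=
  (bot i).2.2.trans_le (top j).2.1

section Intersections

theorem unitSegment_vT_inter_vT_nonempty (k l : Fin (2 * d)) (i j : Fin n) :
    (unitSegment a bot top (vT k i) ∩ unitSegment a bot top (vT l j)).Nonempty ↔
      i = j ∧ (k : ℕ) ≤ l + 1 ∧ (l : ℕ) ≤ k + 1 := by
  rw [unitSegment, unitSegment, horizontal_inter_horizontal_nonempty_of_iff (add_left_inj 1),
    Subtype.coe_inj, EmbeddingLike.apply_eq_iff_eq]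

theorem unitSegment_vB_inter_vB_nonempty (k l : Fin (2 * d)) (i j : Fin n) :
    (unitSegment a bot top (vB k i) ∩ unitSegment a bot top (vB l j)).Nonempty ↔
      i = j ∧ (k : ℕ) ≤ l + 1 ∧ (l : ℕ) ≤ k + 1 := by
  rw [unitSegment, unitSegment, horizontal_inter_horizontal_nonempty_of_iff Iff.rfl,
    Subtype.coe_inj, EmbeddingLike.apply_eq_iff_eq]
  omega

variable (k l : Fin d) (m : Fin (2 * d)) {i j : Fin n} (hi : a i k = true) (hj : a j l = true)

theorem unitSegment_mT_inter_vT_nonempty :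
    (unitSegment a bot top (mT k i hi) ∩ unitSegment a bot top (vT m j)).Nonempty ↔
      gpaRel (mT k i hi) (vT m j) := by
  have hlt : (top i : ℝ) < top j + 1 := by linarith [(top_mem_Ico top i).2, (top_mem_Ico top j).1]
  rw [unitSegment, unitSegment, vertical_inter_horizontal_top_nonempty hlt, Subtype.coe_inj,
    Subtype.coe_le_coe, EmbeddingLike.apply_eq_iff_eq, top.le_iff_le, gpaRel]
  omega

theorem unitSegment_mB_inter_vB_nonempty :
    (unitSegment a bot top (mB k i hi) ∩ unitSegment a bot top (vB m j)).Nonempty ↔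
      gpaRel (mB k i hi) (vB m j) := by
  have hlt : (bot j : ℝ) < bot i + 1 := by linarith [(bot_mem_Ico bot i).1, (bot_mem_Ico bot j).2]
  rw [unitSegment, unitSegment, vertical_inter_horizontal_bottom_nonempty hlt, Subtype.coe_inj,
    Subtype.coe_le_coe, EmbeddingLike.apply_eq_iff_eq, bot.le_iff_le, gpaRel]
  omega

theorem unitSegment_q_inter_mT_nonempty :
    (unitSegment a bot top (q k) ∩ unitSegment a bot top (mT l j hj)).Nonempty ↔ k = l := by
  rw [inter_comm, unitSegment, unitSegment,
    vertical_inter_horizontal_one_nonempty (top_mem_Ico top j)]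
  omega

theorem unitSegment_q_inter_mB_nonempty :
    (unitSegment a bot top (q k) ∩ unitSegment a bot top (mB l j hj)).Nonempty ↔ k = l := by
  rw [inter_comm, unitSegment, unitSegment,
    vertical_inter_horizontal_one_nonempty (bot_mem_Ico bot j)]
  omega

theorem unitSegment_mT_inter_mT_nonempty :
    (unitSegment a bot top (mT k i hi) ∩ unitSegment a bot top (mT l j hj)).Nonempty ↔
      k = l ∧ i = j := by
  rw [unitSegment, unitSegment, vertical_inter_vertical_nonempty_of_mem_Ico (top_mem_Ico top i)
    (top_mem_Ico top j), Subtype.coe_inj, EmbeddingLike.apply_eq_iff_eq]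
  omega

theorem unitSegment_mB_inter_mB_nonempty :
    (unitSegment a bot top (mB k i hi) ∩ unitSegment a bot top (mB l j hj)).Nonempty ↔
      k = l ∧ i = j := by
  rw [unitSegment, unitSegment, vertical_inter_vertical_nonempty_of_mem_Ico (bot_mem_Ico bot i)
    (bot_mem_Ico bot j), Subtype.coe_inj, EmbeddingLike.apply_eq_iff_eq]
  omega

theorem unitSegment_q_inter_q_nonempty :
    (unitSegment a bot top (q k) ∩ unitSegment a bot top (q l)).Nonempty ↔ k = l := by
  rw [unitSegment, unitSegment, horizontal_inter_horizontal_nonempty]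
  norm_cast
  omega

theorem not_unitSegment_vB_inter_vT_nonempty (m' : Fin (2 * d)) :
    ¬(unitSegment a bot top (vB m i) ∩ unitSegment a bot top (vT m' j)).Nonempty := by
  rw [unitSegment, unitSegment, horizontal_inter_horizontal_nonempty]
  rintro ⟨hheight, -⟩
  linarith [bot_lt_top bot top i j]

theorem not_unitSegment_q_inter_vT_nonempty :
    ¬(unitSegment a bot top (q k) ∩ unitSegment a bot top (vT m j)).Nonempty := by
  rw [unitSegment, unitSegment, horizontal_inter_horizontal_nonempty]
  rintro ⟨hheight, -⟩
  linarith [(top j).2.1]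

theorem not_unitSegment_q_inter_vB_nonempty :
    ¬(unitSegment a bot top (q k) ∩ unitSegment a bot top (vB m j)).Nonempty := by
  rw [unitSegment, unitSegment, horizontal_inter_horizontal_nonempty]
  rintro ⟨hheight, -⟩
  linarith [(bot j).2.2]

theorem not_unitSegment_mB_inter_vT_nonempty :
    ¬(unitSegment a bot top (mB k i hi) ∩ unitSegment a bot top (vT m j)).Nonempty := by
  rw [unitSegment, unitSegment, vertical_inter_horizontal_nonempty]
  rintro ⟨-, -, hheight⟩
  linarith [bot_lt_top bot top i j]

theorem not_unitSegment_mT_inter_vB_nonempty :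
    ¬(unitSegment a bot top (mT k i hi) ∩ unitSegment a bot top (vB m j)).Nonempty := by
  rw [unitSegment, unitSegment, vertical_inter_horizontal_nonempty]
  rintro ⟨-, hheight, -⟩
  linarith [bot_lt_top bot top j i]

theorem not_unitSegment_mB_inter_mT_nonempty :
    ¬(unitSegment a bot top (mB k i hi) ∩ unitSegment a bot top (mT l j hj)).Nonempty := by
  rw [unitSegment, unitSegment, vertical_inter_vertical_nonempty_of_mem_Ico (bot_mem_Ico bot i)
    (top_mem_Ico top j)]
  exact fun h => (bot_lt_top bot top i j).ne h.2

end Intersections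

theorem unitSegment_inter_nonempty_iff (u v : GpAVert n d a) :
    (unitSegment a bot top u ∩ unitSegment a bot top v).Nonempty ↔
      u = v ∨ gpaRel u v ∨ gpaRel v u := by
  -- The claim is symmetric, so of two different constructors only one order needs to be treated.
  wlog h : v.ctorIdx ≤ u.ctorIdx generalizing u v
  · rw [inter_comm, this v u (by omega), eq_comm, or_comm (a := gpaRel v u)]
  match u, v, h with
  | vT k i, vT l j, _ =>
    rw [unitSegment_vT_inter_vT_nonempty, vT.injEq, gpaRel, gpaRel, Fin.ext_iff (a := k)]
    omega
  | vB k i, vB l j, _ =>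
    rw [unitSegment_vB_inter_vB_nonempty, vB.injEq, gpaRel, gpaRel, Fin.ext_iff (a := k)]
    omega
  | mT k i hi, vT l j, _ => simp [unitSegment_mT_inter_vT_nonempty, gpaRel]
  | mB k i hi, vB l j, _ => simp [unitSegment_mB_inter_vB_nonempty, gpaRel]
  | q k, mT l j hj, _ => simp [unitSegment_q_inter_mT_nonempty, gpaRel]
  | q k, mB l j hj, _ => simp [unitSegment_q_inter_mB_nonempty, gpaRel]
  | mT k i hi, mT l j hj, _ => simp [unitSegment_mT_inter_mT_nonempty, gpaRel]
  | mB k i hi, mB l j hj, _ => simp [unitSegment_mB_inter_mB_nonempty, gpaRel]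
  | q k, q l, _ => simp [unitSegment_q_inter_q_nonempty, gpaRel]
  | vB k i, vT l j, _ => simp [not_unitSegment_vB_inter_vT_nonempty, gpaRel]
  | q k, vT l j, _ => simp [not_unitSegment_q_inter_vT_nonempty, gpaRel]
  | q k, vB l j, _ => simp [not_unitSegment_q_inter_vB_nonempty, gpaRel]
  | mB k i hi, vT l j, _ => simp [not_unitSegment_mB_inter_vT_nonempty, gpaRel]
  | mT k i hi, vB l j, _ => simp [not_unitSegment_mT_inter_vB_nonempty, gpaRel]
  | mB k i hi, mT l j hj, _ => simp [not_unitSegment_mB_inter_mT_nonempty, gpaRel]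

theorem unitSegment_ne_of_gpaRel {u v : GpAVert n d a} (h : gpaRel u v) :
    unitSegment a bot top u ≠ unitSegment a bot top v := by
  match u, v, h with
  | vT k i, vT l j, ⟨hl, hij⟩ | vB k i, vB l j, ⟨hl, hij⟩ =>
    intro heq
    have hleft := left_eq_of_horizontalUnitSegment_eq heq
    rw [hij, add_left_inj, Nat.cast_inj] at hleft
    omega
  | mT .., vT .., _ | mB .., vB .., _ => exact horizontalUnitSegment_ne_verticalUnitSegment.symm
  | q .., mT .., _ | q .., mB .., _ => exact horizontalUnitSegment_ne_verticalUnitSegment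

theorem unitSegment_injective : Function.Injective (unitSegment a bot top) := by
  intro u v huv
  have hmeet : (unitSegment a bot top u ∩ unitSegment a bot top v).Nonempty := by
    rw [← huv, unitSegment_inter_nonempty_iff]
    exact .inl rfl
  obtain h | h | h := (unitSegment_inter_nonempty_iff a bot top u v).1 hmeet
  · exact h
  · exact absurd huv (unitSegment_ne_of_gpaRel a bot top h)
  · exact absurd huv.symm (unitSegment_ne_of_gpaRel a bot top h)

end GpAVert

theorem gpaGraph_realizable_unit_segments_general (n d : ℕ) (a : Fin n → Fin d → Bool) :
    ∃ seg : GpAVert n d a → Set (ℝ × ℝ),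
      (∀ u, ∃ x y : ℝ × ℝ, seg u = segment ℝ x y ∧
        ((x.1 = y.1 ∧ |x.2 - y.2| = 1) ∨ (x.2 = y.2 ∧ |x.1 - y.1| = 1))) ∧
      Function.Injective seg ∧
      ∀ u v : GpAVert n d a, u ≠ v →
        ((gpaGraph n d a).Adj u v ↔ (seg u ∩ seg v).Nonempty) := by
  have : Infinite (Ico (0 : ℝ) (1 / 2)) := Ico.infinite (by norm_num)
  have : Infinite (Ico (1 / 2 : ℝ) 1) := Ico.infinite (by norm_num)
  obtain ⟨bot⟩ := Order.embedding_from_countable_to_dense (Fin n) (Ico (0 : ℝ) (1 / 2))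
  obtain ⟨top⟩ := Order.embedding_from_countable_to_dense (Fin n) (Ico (1 / 2 : ℝ) 1)
  refine ⟨GpAVert.unitSegment a bot top, GpAVert.exists_unitSegment_eq_segment a bot top,
    GpAVert.unitSegment_injective a bot top, fun u v huv => ?_⟩
  rw [GpAVert.unitSegment_inter_nonempty_iff, or_iff_right huv, gpaGraph,
    SimpleGraph.fromRel_adj, and_iff_right huv]

/-- `G'(A)` can be realized as an intersection graph of axis-parallel
unit segments in the plane: there is an injective assignment of closed horizontal or
vertical segments of length `1` in `ℝ²` to the vertices such that two distinct vertices are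
adjacent iff their segments have a common point. -/
theorem gpaGraph_realizable_unit_segments (n d : ℕ) (hn : 1 ≤ n) (hd : 1 ≤ d)
    (a : Fin n → Fin d → Bool) (hall : ∃ i₀ : Fin n, ∀ k : Fin d, a i₀ k = true) :
    ∃ seg : GpAVert n d a → Set (ℝ × ℝ),
      (∀ u, ∃ x y : ℝ × ℝ, seg u = segment ℝ x y ∧
        ((x.1 = y.1 ∧ |x.2 - y.2| = 1) ∨ (x.2 = y.2 ∧ |x.1 - y.1| = 1))) ∧
      Function.Injective seg ∧
      ∀ u v : GpAVert n d a, u ≠ v →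
        ((gpaGraph n d a).Adj u v ↔ (seg u ∩ seg v).Nonempty) :=
  gpaGraph_realizable_unit_segments_general n d a
end
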